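/- arXiv:2402.07809 — 9 statements merged into one kernel-verified Lean document; each statement's English description precedes it below -/
import Mathlib

section
/- For all K, L ∈ ℕ, lim_{n→∞} | Σ_{p,q=0}^{n} a_{n,p,q}² (p/n)^{2K} (q/n)^{2L} − (1/(π² n^{2(K+L)})) ∫_{[0,2π]²} (∂_x^K ∂_y^L h_n(x,y))² dx dy | = 0. -/
open Real MeasureTheory Finset Filter

/-- The mixed partial derivative `∂_x^K ∂_y^L g` of a two-variable function, at `(x, y)`. -/
noncomputable def mixedPartial (K L : ℕ) (g : ℝ → ℝ → ℝ) (x y : ℝ) : ℝ :=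
  iteratedDeriv K (fun x' => iteratedDeriv L (g x') y) x

/-- `h_n(x,y) = T_n((cos x + cos y)/2)`. -/
noncomputable def hFun (n : ℕ) (x y : ℝ) : ℝ :=
  (Polynomial.Chebyshev.T ℝ n).eval ((Real.cos x + Real.cos y) / 2)

/-!
By Parseval, the normalised integral is the moment sum with an extra factor `2` for each of the
indices `p`, `q` that vanishes, so the difference is at most `3 * (∑ a_{n,0,q}² + ∑ a_{n,p,0}²)`,
whatever `K` and `L`. By Parseval again, the first of these sums is at most a multiple of the
squared `L²` norm of `y ↦ ∫ x in 0..π, h_n(x, y)`. Since `h_n = cos (n θ)` with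
`cos θ = (cos x + cos y) / 2`, and `x ↦ θ(x, y)` pushes Lebesgue measure on `(0, π)` forward to an
absolutely continuous measure, this function tends to `0` pointwise by the Riemann–Lebesgue lemma;
it is bounded, so its `L²` norm tends to `0` as well. The second sum follows by symmetry.
-/

open scoped Topology InnerProductSpace

section Orthogonality

variable {α β ι κ : Type*} [MeasurableSpace α] [MeasurableSpace β]
  {μ : Measure α} {ν : Measure β} {f : ι → α → ℝ} {g : κ → β → ℝ}

theorem integral_sq_sum_of_orthogonal
    (hf : ∀ i j, Integrable (fun x => f i x * f j x) μ)
    (hf_orth : Pairwise fun i j => ∫ x, f i x * f j x ∂μ = 0) (s : Finset ι) (c : ι → ℝ) :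
    ∫ x, (∑ i ∈ s, c i * f i x) ^ 2 ∂μ = ∑ i ∈ s, c i ^ 2 * ∫ x, f i x ^ 2 ∂μ := by
  have expand (x : α) : (∑ i ∈ s, c i * f i x) ^ 2 =
      ∑ i ∈ s, ∑ j ∈ s, c i * c j * (f i x * f j x) := by
    simp only [sq, sum_mul_sum, mul_mul_mul_comm]
  have integrable_term (i j : ι) : Integrable (fun x => c i * c j * (f i x * f j x)) μ :=
    (hf i j).const_mul _
  simp_rw [expand]
  rw [integral_finsetSum _ fun i _ => integrable_finsetSum _ fun j _ => integrable_term i j]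
  refine sum_congr rfl fun i hi => ?_
  rw [integral_finsetSum _ fun j _ => integrable_term i j, sum_eq_single_of_mem i hi]
  · simp only [integral_const_mul, sq]
  · intro j _ hji
    rw [integral_const_mul, hf_orth hji.symm, mul_zero]

theorem integral_prod_sq_sum_of_orthogonal [SFinite μ] [SFinite ν]
    (hf : ∀ i j, Integrable (fun x => f i x * f j x) μ)
    (hf_orth : Pairwise fun i j => ∫ x, f i x * f j x ∂μ = 0)
    (hg : ∀ i j, Integrable (fun y => g i y * g j y) ν)
    (hg_orth : Pairwise fun i j => ∫ y, g i y * g j y ∂ν = 0)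
    (s : Finset ι) (t : Finset κ) (c : ι → κ → ℝ) :
    ∫ z, (∑ i ∈ s, ∑ j ∈ t, c i j * (f i z.1 * g j z.2)) ^ 2 ∂μ.prod ν =
      ∑ i ∈ s, ∑ j ∈ t, c i j ^ 2 * ((∫ x, f i x ^ 2 ∂μ) * ∫ y, g j y ^ 2 ∂ν) := by
  have integrable_tensor (k l : ι × κ) :
      Integrable (fun z : α × β => f k.1 z.1 * g k.2 z.2 * (f l.1 z.1 * g l.2 z.2))
        (μ.prod ν) := by
    simpa only [mul_mul_mul_comm] using (hf k.1 l.1).mul_prod (hg k.2 l.2)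
  have tensor_orth : Pairwise fun k l : ι × κ =>
      ∫ z, f k.1 z.1 * g k.2 z.2 * (f l.1 z.1 * g l.2 z.2) ∂μ.prod ν = 0 := by
    intro k l hkl
    simp_rw [mul_mul_mul_comm]
    rw [integral_prod_mul (fun x => f k.1 x * f l.1 x) fun y => g k.2 y * g l.2 y]
    by_cases h : k.1 = l.1
    · rw [hg_orth fun h' => hkl (Prod.ext h h'), mul_zero]
    · rw [hf_orth h, zero_mul]
  simp_rw [← sum_product']
  rw [integral_sq_sum_of_orthogonal integrable_tensor tensor_orth (s ×ˢ t) fun k => c k.1 k.2]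
  simp_rw [mul_pow]
  exact sum_congr rfl fun k _ => by
    rw [integral_prod_mul (fun x => f k.1 x ^ 2) fun y => g k.2 y ^ 2]

end Orthogonality

theorem mixedPartial_sum_mul {ι κ : Type*} {f : ι → ℝ → ℝ} {g : κ → ℝ → ℝ} {K L : ℕ}
    (hf : ∀ i, ContDiff ℝ K (f i)) (hg : ∀ j, ContDiff ℝ L (g j))
    (s : Finset ι) (t : Finset κ) (c : ι → κ → ℝ) (x y : ℝ) :
    mixedPartial K L (fun x y => ∑ i ∈ s, ∑ j ∈ t, c i j * f i x * g j y) x y =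
      ∑ i ∈ s, ∑ j ∈ t, c i j * (iteratedDeriv K (f i) x * iteratedDeriv L (g j) y) := by
  have deriv_y (x : ℝ) : iteratedDeriv L (fun y => ∑ i ∈ s, ∑ j ∈ t, c i j * f i x * g j y) y =
      ∑ i ∈ s, (∑ j ∈ t, c i j * iteratedDeriv L (g j) y) * f i x := by
    rw [iteratedDeriv_fun_sum fun i _ => by fun_prop]
    refine sum_congr rfl fun i _ => ?_
    rw [iteratedDeriv_fun_sum fun j _ => by fun_prop, sum_mul]
    exact sum_congr rfl fun j _ => by rw [iteratedDeriv_const_mul_field, mul_right_comm]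
  simp only [mixedPartial, deriv_y]
  rw [iteratedDeriv_fun_sum fun i _ => by fun_prop]
  refine sum_congr rfl fun i _ => ?_
  rw [iteratedDeriv_const_mul_field, sum_mul]
  exact sum_congr rfl fun j _ => by ring

section CosineSystem

theorem iteratedDeriv_cos_eq_cos_add (K : ℕ) :
    iteratedDeriv K cos = fun x => cos (x + K * (π / 2)) := by
  induction K with
  | zero => simp
  | succ K ih =>
    ext x
    have phase : x + (K + 1 : ℕ) * (π / 2) = x + K * (π / 2) + π / 2 := by push_cast; ring
    rw [iteratedDeriv_succ, ih, deriv_comp_add_const, Real.deriv_cos, phase, cos_add_pi_div_two]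

theorem integral_cos_int_mul_add {m : ℤ} (hm : m ≠ 0) (b : ℝ) :
    ∫ x in 0..2 * π, cos (m * x + b) = 0 := by
  rw [intervalIntegral.integral_comp_mul_add cos (Int.cast_ne_zero.2 hm), integral_cos,
    add_comm _ b, sin_add_int_mul_two_pi]
  simp

theorem integral_cos_mul_cos_of_ne {p r : ℕ} (hpr : p ≠ r) (b c : ℝ) :
    ∫ x in 0..2 * π, cos (p * x + b) * cos (r * x + c) = 0 := by
  have product_to_sum (x : ℝ) : cos (p * x + b) * cos (r * x + c) =
      (cos ((p - r : ℤ) * x + (b - c)) + cos ((p + r : ℤ) * x + (b + c))) / 2 := by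
    have := two_mul_cos_mul_cos (p * x + b) (r * x + c)
    push_cast
    ring_nf at this ⊢
    linarith
  simp_rw [product_to_sum]
  rw [intervalIntegral.integral_div, intervalIntegral.integral_add
    (Continuous.intervalIntegrable (by fun_prop) _ _)
    (Continuous.intervalIntegrable (by fun_prop) _ _),
    integral_cos_int_mul_add (by omega), integral_cos_int_mul_add (by omega)]
  simp

theorem integral_cos_nat_mul_add_sq {p : ℕ} (hp : p ≠ 0) (b : ℝ) :
    ∫ x in 0..2 * π, cos (p * x + b) ^ 2 = π := by
  have double_angle (x : ℝ) :
      cos (p * x + b) ^ 2 = 1 / 2 + cos ((2 * p : ℤ) * x + 2 * b) / 2 := by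
    rw [cos_sq]
    push_cast
    ring_nf
  simp_rw [double_angle]
  rw [intervalIntegral.integral_add (Continuous.intervalIntegrable (by fun_prop) _ _)
    (Continuous.intervalIntegrable (by fun_prop) _ _),
    intervalIntegral.integral_div (f := fun x => cos ((2 * p : ℤ) * x + 2 * b)),
    integral_cos_int_mul_add (by omega), intervalIntegral.integral_const, smul_eq_mul]
  ring

theorem integral_cos_nat_mul_zero_pi (p : ℕ) :
    ∫ x in 0..π, cos (p * x) = if p = 0 then π else 0 := by
  split_ifs with hp
  · simp [hp]
  · rw [intervalIntegral.integral_comp_mul_left cos (Nat.cast_ne_zero.2 hp), integral_cos]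
    simp

/-- The `K`-th derivative of `x ↦ cos (p x)`. For each fixed `K` these functions form an orthogonal
system on `[0, 2π]`. -/
noncomputable def cosDeriv (K p : ℕ) : ℝ → ℝ :=
  iteratedDeriv K fun x => cos (p * x)

/-- The factor in `∫ x in 0..2π, cos (p x) ^ 2 = π * cosWeight p`: it is `2` for the constant
function `p = 0` and `1` otherwise. -/
def cosWeight (p : ℕ) : ℝ := if p = 0 then 2 else 1

theorem cosDeriv_apply (K p : ℕ) (x : ℝ) :
    cosDeriv K p x = p ^ K * cos (p * x + K * (π / 2)) := by
  rw [cosDeriv, iteratedDeriv_comp_const_mul contDiff_cos, iteratedDeriv_cos_eq_cos_add]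

theorem cosDeriv_zero (p : ℕ) (x : ℝ) : cosDeriv 0 p x = cos (p * x) := by
  simp [cosDeriv]

theorem continuous_cosDeriv (K p : ℕ) : Continuous (cosDeriv K p) := by
  simp only [funext (cosDeriv_apply K p)]
  fun_prop

theorem integrableOn_cosDeriv_mul_cosDeriv (K p r : ℕ) :
    IntegrableOn (fun x => cosDeriv K p x * cosDeriv K r x) (Set.Icc 0 (2 * π)) :=
  ((continuous_cosDeriv K p).mul (continuous_cosDeriv K r)).integrableOn_Icc

theorem setIntegral_Icc_zero_two_pi (f : ℝ → ℝ) :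
    ∫ x in Set.Icc 0 (2 * π), f x = ∫ x in 0..2 * π, f x := by
  rw [integral_Icc_eq_integral_Ioc, intervalIntegral.integral_of_le two_pi_pos.le]

theorem pairwise_integral_cosDeriv_mul_cosDeriv_eq_zero (K : ℕ) :
    Pairwise fun p r => ∫ x in Set.Icc 0 (2 * π), cosDeriv K p x * cosDeriv K r x = 0 := by
  intro p r hpr
  simp_rw [setIntegral_Icc_zero_two_pi, cosDeriv_apply, mul_mul_mul_comm]
  rw [intervalIntegral.integral_const_mul, integral_cos_mul_cos_of_ne hpr, mul_zero]

theorem integral_cosDeriv_sq (K p : ℕ) :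
    ∫ x in Set.Icc 0 (2 * π), cosDeriv K p x ^ 2 = π * p ^ (2 * K) * cosWeight p := by
  simp_rw [setIntegral_Icc_zero_two_pi, cosDeriv_apply, mul_pow]
  rw [intervalIntegral.integral_const_mul, ← pow_mul']
  rcases eq_or_ne p 0 with rfl | hp
  · rcases eq_or_ne K 0 with rfl | hK
    · simp [cosWeight, mul_comm]
    · simp [hK]
  · rw [integral_cos_nat_mul_add_sq hp, cosWeight, if_neg hp, mul_one, mul_comm]

end CosineSystem

section CosPoly

/-- The double cosine polynomial `∑_{p,q ≤ n} a_{p,q} cos (p x) cos (q y)`. -/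
noncomputable def cosPoly (n : ℕ) (a : ℕ → ℕ → ℝ) (x y : ℝ) : ℝ :=
  ∑ p ∈ range (n + 1), ∑ q ∈ range (n + 1), a p q * cos (p * x) * cos (q * y)

theorem cosPoly_swap (n : ℕ) (a : ℕ → ℕ → ℝ) (x y : ℝ) :
    cosPoly n (Function.swap a) x y = cosPoly n a y x := by
  rw [cosPoly, sum_comm]
  simp only [cosPoly, Function.swap, mul_right_comm]

theorem mixedPartial_cosPoly (n : ℕ) (a : ℕ → ℕ → ℝ) (K L : ℕ) (x y : ℝ) :
    mixedPartial K L (cosPoly n a) x y =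
      ∑ p ∈ range (n + 1), ∑ q ∈ range (n + 1), a p q * (cosDeriv K p x * cosDeriv L q y) :=
  mixedPartial_sum_mul (fun _ => by fun_prop) (fun _ => by fun_prop) _ _ a x y

theorem integral_mixedPartial_cosPoly_sq (n : ℕ) (a : ℕ → ℕ → ℝ) (K L : ℕ) :
    ∫ z in Set.Icc 0 (2 * π) ×ˢ Set.Icc 0 (2 * π), mixedPartial K L (cosPoly n a) z.1 z.2 ^ 2 =
      ∑ p ∈ range (n + 1), ∑ q ∈ range (n + 1),
        a p q ^ 2 * (π * p ^ (2 * K) * cosWeight p * (π * q ^ (2 * L) * cosWeight q)) := by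
  simp_rw [mixedPartial_cosPoly]
  rw [Measure.volume_eq_prod, ← Measure.prod_restrict,
    integral_prod_sq_sum_of_orthogonal (integrableOn_cosDeriv_mul_cosDeriv K)
      (pairwise_integral_cosDeriv_mul_cosDeriv_eq_zero K) (integrableOn_cosDeriv_mul_cosDeriv L)
      (pairwise_integral_cosDeriv_mul_cosDeriv_eq_zero L)]
  simp_rw [integral_cosDeriv_sq]

theorem normalized_integral_mixedPartial_cosPoly_sq (n : ℕ) (a : ℕ → ℕ → ℝ) (K L : ℕ) :
    (π ^ 2 * (n : ℝ) ^ (2 * (K + L)))⁻¹ *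
        ∫ z in Set.Icc 0 (2 * π) ×ˢ Set.Icc 0 (2 * π),
          mixedPartial K L (cosPoly n a) z.1 z.2 ^ 2 =
      ∑ p ∈ range (n + 1), ∑ q ∈ range (n + 1),
        a p q ^ 2 * ((p : ℝ) / n) ^ (2 * K) * ((q : ℝ) / n) ^ (2 * L) *
          (cosWeight p * cosWeight q) := by
  rw [integral_mixedPartial_cosPoly_sq]
  simp_rw [mul_sum]
  refine sum_congr rfl fun p _ => sum_congr rfl fun q _ => ?_
  rw [div_pow, div_pow, mul_add, pow_add]
  field_simp

theorem abs_one_sub_cosWeight_mul_cosWeight_le (p q : ℕ) :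
    |1 - cosWeight p * cosWeight q| ≤ 3 * ((if p = 0 then 1 else 0) + if q = 0 then 1 else 0) := by
  unfold cosWeight
  split_ifs <;> norm_num

theorem sum_mul_indicator_axes (n : ℕ) (b : ℕ → ℕ → ℝ) (c : ℝ) :
    ∑ p ∈ range (n + 1), ∑ q ∈ range (n + 1),
        b p q * (c * ((if p = 0 then 1 else 0) + if q = 0 then 1 else 0)) =
      c * (∑ q ∈ range (n + 1), b 0 q + ∑ p ∈ range (n + 1), b p 0) := by
  simp only [mul_add, mul_ite, mul_one, mul_zero, sum_add_distrib]
  rw [sum_comm]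
  simp [sum_mul, mul_comm c]

theorem abs_moment_sub_integral_le (n : ℕ) (a : ℕ → ℕ → ℝ) (K L : ℕ) :
    |(∑ p ∈ range (n + 1), ∑ q ∈ range (n + 1),
          a p q ^ 2 * ((p : ℝ) / n) ^ (2 * K) * ((q : ℝ) / n) ^ (2 * L)) -
        (π ^ 2 * (n : ℝ) ^ (2 * (K + L)))⁻¹ *
          ∫ z in Set.Icc 0 (2 * π) ×ˢ Set.Icc 0 (2 * π),
            mixedPartial K L (cosPoly n a) z.1 z.2 ^ 2| ≤
      3 * (∑ q ∈ range (n + 1), a 0 q ^ 2 + ∑ p ∈ range (n + 1), a p 0 ^ 2) := by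
  have ratio_pow_le_one {p : ℕ} (hp : p ∈ range (n + 1)) (M : ℕ) : ((p : ℝ) / n) ^ M ≤ 1 :=
    pow_le_one₀ (by positivity)
      (div_le_one_of_le₀ (mod_cast mem_range_succ_iff.1 hp) (by positivity))
  rw [normalized_integral_mixedPartial_cosPoly_sq]
  simp_rw [← sum_sub_distrib, ← mul_one_sub]
  rw [← sum_mul_indicator_axes n fun p q => a p q ^ 2]
  refine (abs_sum_le_sum_abs _ _).trans (sum_le_sum fun p hp => ?_)
  refine (abs_sum_le_sum_abs _ _).trans (sum_le_sum fun q hq => ?_)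
  rw [abs_mul, abs_of_nonneg (by positivity), mul_assoc (a p q ^ 2)]
  gcongr
  · exact mul_le_of_le_one_right (sq_nonneg _)
      (mul_le_one₀ (ratio_pow_le_one hp _) (by positivity) (ratio_pow_le_one hq _))
  · exact abs_one_sub_cosWeight_mul_cosWeight_le p q

theorem integral_cosPoly_left (n : ℕ) (a : ℕ → ℕ → ℝ) (y : ℝ) :
    ∫ x in 0..π, cosPoly n a x y = π * ∑ q ∈ range (n + 1), a 0 q * cos (q * y) := by
  have collect (x : ℝ) : cosPoly n a x y =
      ∑ p ∈ range (n + 1), (∑ q ∈ range (n + 1), a p q * cos (q * y)) * cos (p * x) := by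
    simp only [cosPoly, sum_mul, mul_right_comm]
  simp_rw [collect]
  rw [intervalIntegral.integral_finsetSum
    fun p _ => Continuous.intervalIntegrable (by fun_prop) _ _]
  simp [integral_cos_nat_mul_zero_pi, mul_comm π]

theorem sum_sq_le_integral_cos_sum_sq (n : ℕ) (c : ℕ → ℝ) :
    ∑ q ∈ range (n + 1), c q ^ 2 ≤
      π⁻¹ * ∫ y in Set.Icc 0 (2 * π), (∑ q ∈ range (n + 1), c q * cos (q * y)) ^ 2 := by
  simp_rw [← cosDeriv_zero]
  rw [integral_sq_sum_of_orthogonal (integrableOn_cosDeriv_mul_cosDeriv 0)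
    (pairwise_integral_cosDeriv_mul_cosDeriv_eq_zero 0), mul_sum]
  refine sum_le_sum fun q _ => ?_
  have one_le_weight : 1 ≤ cosWeight q := by unfold cosWeight; split_ifs <;> norm_num
  calc c q ^ 2 ≤ c q ^ 2 * cosWeight q := le_mul_of_one_le_right (sq_nonneg _) one_le_weight
    _ = π⁻¹ * (c q ^ 2 * ∫ y in Set.Icc 0 (2 * π), cosDeriv 0 q y ^ 2) := by
      rw [integral_cosDeriv_sq]
      field_simp
      simp

theorem tendsto_sum_sq_coeff_zero_left {a : ℕ → ℕ → ℕ → ℝ} {C : ℝ}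
    (hbdd : ∀ n x y, |cosPoly n (a n) x y| ≤ C)
    (hmean : ∀ y, Tendsto (fun n => ∫ x in 0..π, cosPoly n (a n) x y) atTop (𝓝 0)) :
    Tendsto (fun n => ∑ q ∈ range (n + 1), a n 0 q ^ 2) atTop (𝓝 0) := by
  have row_eq (n : ℕ) (y : ℝ) : ∑ q ∈ range (n + 1), a n 0 q * cos (q * y) =
      π⁻¹ * ∫ x in 0..π, cosPoly n (a n) x y := by
    rw [integral_cosPoly_left, inv_mul_cancel_left₀ pi_ne_zero]
  have row_bdd (n : ℕ) (y : ℝ) : |∑ q ∈ range (n + 1), a n 0 q * cos (q * y)| ≤ C := by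
    have integral_bdd := intervalIntegral.norm_integral_le_of_norm_le_const (a := 0) (b := π)
      (f := fun x => cosPoly n (a n) x y) fun x _ => hbdd n x y
    rw [Real.norm_eq_abs, sub_zero, abs_of_pos pi_pos] at integral_bdd
    rwa [row_eq, abs_mul, abs_of_pos (inv_pos.2 pi_pos), inv_mul_le_iff₀ pi_pos, mul_comm π]
  have row_tendsto (y : ℝ) :
      Tendsto (fun n => ∑ q ∈ range (n + 1), a n 0 q * cos (q * y)) atTop (𝓝 0) := by
    simpa only [row_eq, mul_zero] using (hmean y).const_mul π⁻¹
  have integral_tendsto : Tendsto (fun n => ∫ y in Set.Icc 0 (2 * π),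
      (∑ q ∈ range (n + 1), a n 0 q * cos (q * y)) ^ 2) atTop
      (𝓝 (∫ _ in Set.Icc 0 (2 * π), (0 : ℝ))) := by
    refine tendsto_integral_of_dominated_convergence (fun _ => C ^ 2)
      (fun n => Continuous.aestronglyMeasurable (by fun_prop)) (integrable_const _)
      (fun n => .of_forall fun y => ?_) (.of_forall fun y => ?_)
    · rw [norm_pow, Real.norm_eq_abs]
      exact pow_le_pow_left₀ (abs_nonneg _) (row_bdd n y) 2
    · simpa using (row_tendsto y).pow 2
  refine squeeze_zero (fun n => sum_nonneg fun _ _ => sq_nonneg _)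
    (fun n => sum_sq_le_integral_cos_sum_sq n (a n 0)) ?_
  simpa using integral_tendsto.const_mul π⁻¹

end CosPoly

section RiemannLebesgue

theorem tendsto_charFun_cocompact {E : Type*} [NormedAddCommGroup E] [InnerProductSpace ℝ E]
    [FiniteDimensional ℝ E] [MeasurableSpace E] [BorelSpace E] {μ : Measure E} [IsFiniteMeasure μ]
    (hμ : μ ≪ volume) : Tendsto (charFun μ) (cocompact E) (𝓝 0) := by
  have scale : Tendsto (fun t : E => (-(2 * π)⁻¹) • t) (cocompact E) (cocompact E) :=
    (Homeomorph.smulOfNeZero (-(2 * π)⁻¹)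
      (by simp [pi_ne_zero])).isClosedEmbedding.tendsto_cocompact
  refine ((tendsto_integral_exp_inner_smul_cocompact
    fun v => ((μ.rnDeriv volume v).toReal : ℂ)).comp scale).congr fun t => ?_
  rw [charFun_apply, ← integral_rnDeriv_smul hμ]
  refine integral_congr_ae (.of_forall fun v => ?_)
  have phase : 2 * π * -⟪v, (-(2 * π)⁻¹) • t⟫_ℝ = ⟪v, t⟫_ℝ := by
    rw [inner_smul_right]
    field_simp
  simp only [Circle.smul_def, Real.fourierChar_apply, phase, smul_eq_mul, Complex.real_smul]
  exact mul_comm _ _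

theorem tendsto_integral_cos_nat_mul {μ : Measure ℝ} [IsFiniteMeasure μ] (hμ : μ ≪ volume) :
    Tendsto (fun n : ℕ => ∫ t, cos (n * t) ∂μ) atTop (𝓝 0) := by
  have natCast_cocompact : Tendsto ((↑) : ℕ → ℝ) atTop (cocompact ℝ) :=
    tendsto_natCast_atTop_atTop.mono_right atTop_le_cocompact
  have re_tendsto := (Complex.continuous_re.tendsto 0).comp
    ((tendsto_charFun_cocompact hμ).comp natCast_cocompact)
  refine re_tendsto.congr fun n => ?_
  have integrable_exp : Integrable (fun t : ℝ => Complex.exp (n * t * Complex.I)) μ := by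
    refine .of_bound (Continuous.aestronglyMeasurable (by fun_prop)) 1 (.of_forall fun t => ?_)
    exact_mod_cast (Complex.norm_exp_ofReal_mul_I (n * t)).le
  simp only [Function.comp_apply, charFun_apply_real, Complex.ofReal_natCast]
  refine (integral_re integrable_exp).symm.trans (integral_congr_ae (.of_forall fun t => ?_))
  exact_mod_cast Complex.exp_ofReal_mul_I_re (n * t)

theorem map_restrict_absolutelyContinuous_of_leftInvOn {E : Type*} [NormedAddCommGroup E]
    [NormedSpace ℝ E] [FiniteDimensional ℝ E] [MeasurableSpace E] [BorelSpace E]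
    {μ : Measure E} [μ.IsAddHaarMeasure] {f g : E → E} {s : Set E} (hf : Measurable f)
    (hgf : Set.LeftInvOn g f s) (hg : DifferentiableOn ℝ g (f '' s)) :
    (μ.restrict s).map f ≪ μ := by
  refine Measure.AbsolutelyContinuous.mk fun N hN hN_null => ?_
  rw [Measure.map_apply hf hN, Measure.restrict_apply (hf hN)]
  have image_null : μ (g '' (N ∩ f '' s)) = 0 :=
    addHaar_image_eq_zero_of_differentiableOn_of_addHaar_eq_zero μ
      (hg.mono Set.inter_subset_right) (measure_mono_null Set.inter_subset_left hN_null)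
  refine measure_mono_null ?_ image_null
  rintro x ⟨hxN, hxs⟩
  exact ⟨f x, ⟨hxN, x, hxs, rfl⟩, hgf hxs⟩

end RiemannLebesgue

section Chebyshev

/-- The angle `θ ∈ [0, π]` with `cos θ = (cos x + cos y) / 2`, for which `h_n(x, y) = cos (n θ)`. -/
noncomputable def hAngle (x y : ℝ) : ℝ := arccos ((cos x + cos y) / 2)

theorem cos_hAngle (x y : ℝ) : cos (hAngle x y) = (cos x + cos y) / 2 :=
  cos_arccos (by linarith [neg_one_le_cos x, neg_one_le_cos y])
    (by linarith [cos_le_one x, cos_le_one y])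

theorem measurable_hAngle_left (y : ℝ) : Measurable fun x => hAngle x y :=
  (continuous_arccos.comp (by fun_prop)).measurable

theorem hFun_eq_cos_mul_hAngle (n : ℕ) (x y : ℝ) : hFun n x y = cos (n * hAngle x y) := by
  rw [hFun, ← cos_hAngle, Polynomial.Chebyshev.T_real_cos, Int.cast_natCast]

theorem abs_hFun_le_one (n : ℕ) (x y : ℝ) : |hFun n x y| ≤ 1 := by
  rw [hFun_eq_cos_mul_hAngle]
  exact abs_cos_le_one _

theorem hFun_comm (n : ℕ) (x y : ℝ) : hFun n x y = hFun n y x := by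
  rw [hFun, hFun, add_comm]

theorem map_hAngle_absolutelyContinuous (y : ℝ) :
    (volume.restrict (Set.Ioo 0 π)).map (fun x => hAngle x y) ≪ volume := by
  have cos_recover (x : ℝ) : 2 * cos (hAngle x y) - cos y = cos x := by rw [cos_hAngle]; ring
  refine map_restrict_absolutelyContinuous_of_leftInvOn
    (g := fun t => arccos (2 * cos t - cos y)) (measurable_hAngle_left y) ?_ ?_
  · intro x hx
    simp only [cos_recover, arccos_cos hx.1.le hx.2.le]
  · rintro _ ⟨x, hx, rfl⟩
    have arccos_diff : DifferentiableAt ℝ arccos (2 * cos (hAngle x y) - cos y) := by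
      rw [cos_recover, differentiableAt_arccos]
      have cos_lt_one := cos_lt_cos_of_nonneg_of_le_pi le_rfl hx.2.le hx.1
      have neg_one_lt_cos := cos_lt_cos_of_nonneg_of_le_pi hx.1.le le_rfl hx.2
      rw [cos_zero] at cos_lt_one
      rw [cos_pi] at neg_one_lt_cos
      exact ⟨neg_one_lt_cos.ne', cos_lt_one.ne⟩
    exact (arccos_diff.comp (hAngle x y) (f := fun t => 2 * cos t - cos y)
      (by fun_prop)).differentiableWithinAt

theorem tendsto_integral_hFun_left (y : ℝ) :
    Tendsto (fun n => ∫ x in 0..π, hFun n x y) atTop (𝓝 0) := by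
  refine (tendsto_integral_cos_nat_mul (map_hAngle_absolutelyContinuous y)).congr fun n => ?_
  rw [integral_map (measurable_hAngle_left y).aemeasurable
    (Continuous.aestronglyMeasurable (by fun_prop)),
    intervalIntegral.integral_of_le pi_pos.le, integral_Ioc_eq_integral_Ioo]
  simp_rw [hFun_eq_cos_mul_hAngle]

theorem tendsto_sum_sq_hFun_coeff_zero_left {a : ℕ → ℕ → ℕ → ℝ}
    (ha : ∀ n, hFun n = cosPoly n (a n)) :
    Tendsto (fun n => ∑ q ∈ range (n + 1), a n 0 q ^ 2) atTop (𝓝 0) :=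
  tendsto_sum_sq_coeff_zero_left (C := 1) (fun n => ha n ▸ abs_hFun_le_one n)
    fun y => by simpa only [ha] using tendsto_integral_hFun_left y

end Chebyshev

/-- `lim_{n→∞} | Σ_{p,q} a_{n,p,q}² (p/n)^{2K} (q/n)^{2L}
  − (1/(π² n^{2(K+L)})) ∫_{[0,2π]²} (∂_x^K ∂_y^L h_n)² | = 0`. -/
theorem moment_to_integral
    (a : ℕ → ℕ → ℕ → ℝ)
    (ha : ∀ (n : ℕ) (x y : ℝ),
      (Polynomial.Chebyshev.T ℝ n).eval ((Real.cos x + Real.cos y) / 2) =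
        ∑ p ∈ Finset.range (n + 1), ∑ q ∈ Finset.range (n + 1),
          a n p q * Real.cos (p * x) * Real.cos (q * y))
    (K L : ℕ) :
    Filter.Tendsto (fun n : ℕ =>
        |(∑ p ∈ Finset.range (n + 1), ∑ q ∈ Finset.range (n + 1),
            (a n p q) ^ 2 * ((p : ℝ) / n) ^ (2 * K) * ((q : ℝ) / n) ^ (2 * L)) -
          (π ^ 2 * (n : ℝ) ^ (2 * (K + L)))⁻¹ *
            ∫ z in Set.Icc (0 : ℝ) (2 * π) ×ˢ Set.Icc (0 : ℝ) (2 * π),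
              (mixedPartial K L (hFun n) z.1 z.2) ^ 2|)
      Filter.atTop (nhds 0) := by
  have expansion (n : ℕ) : hFun n = cosPoly n (a n) := funext₂ (ha n)
  have expansion_swap (n : ℕ) : hFun n = cosPoly n (Function.swap (a n)) := by
    ext x y
    rw [cosPoly_swap, ← expansion, hFun_comm]
  have axes_tendsto := ((tendsto_sum_sq_hFun_coeff_zero_left expansion).add
    (tendsto_sum_sq_hFun_coeff_zero_left expansion_swap)).const_mul 3
  rw [add_zero, mul_zero] at axes_tendsto
  refine squeeze_zero (fun n => abs_nonneg _) (fun n => ?_) axes_tendsto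
  rw [expansion]
  exact abs_moment_sub_integral_le n (a n) K L
end

section
/- For every n ∈ ℕ, Σ_{p,q=0}^{n} a_{n,p,q}² ≤ 4. -/
open Real Finset

/-!
The functions `T_p(u) T_q(v)` are orthogonal for the product of two copies of the Chebyshev measure
`du / √(1 - u²)` on `[-1, 1]`. This product has total mass `π²`, and each of these functions has
squared norm at least `(π / 2)²`. Substituting `u = cos x` and `v = cos y`, the `a_{n,p,q}` become
the coefficients of `T_n((u + v) / 2)` in this system. As `|T_n| ≤ 1` on `[-1, 1]`, integrating the
square of the expansion gives `(π / 2)² ∑ a_{n,p,q}² ≤ π²`.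
-/

open MeasureTheory Polynomial.Chebyshev

section OrthogonalSystem

variable {α β ι κ : Type*} [MeasurableSpace α] [MeasurableSpace β]
  {μ : Measure α} {ν : Measure β} {f : ι → α → ℝ} {g : κ → β → ℝ}

/-- A family of real functions that are pairwise orthogonal for the pairing `∫ f g ∂μ`, so
that the square of a linear combination integrates to a sum of squares. Integrability of the
products is required separately because the Bochner integral of a non-integrable function is `0`. -/
structure IsOrthogonalSystem (μ : Measure α) (f : ι → α → ℝ) : Prop where
  integrable_mul : ∀ i j, Integrable (fun x ↦ f i x * f j x) μ
  integral_mul_eq_zero : Pairwise fun i j ↦ ∫ x, f i x * f j x ∂μ = 0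

namespace IsOrthogonalSystem

theorem prod [SFinite μ] [SFinite ν] (hf : IsOrthogonalSystem μ f) (hg : IsOrthogonalSystem ν g) :
    IsOrthogonalSystem (μ.prod ν) fun (k : ι × κ) z ↦ f k.1 z.1 * g k.2 z.2 where
  integrable_mul k l := by
    simpa only [mul_mul_mul_comm] using
      (hf.integrable_mul k.1 l.1).mul_prod (hg.integrable_mul k.2 l.2)
  integral_mul_eq_zero k l hkl := by
    simp only [mul_mul_mul_comm (f k.1 _)]
    rw [integral_prod_mul (fun x ↦ f k.1 x * f l.1 x) (fun y ↦ g k.2 y * g l.2 y), mul_eq_zero]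
    by_cases hfst : k.1 = l.1
    · exact .inr (hg.integral_mul_eq_zero fun hsnd ↦ hkl (Prod.ext hfst hsnd))
    · exact .inl (hf.integral_mul_eq_zero hfst)

theorem integral_sum_mul_sq (hf : IsOrthogonalSystem μ f) (s : Finset ι) (c : ι → ℝ) :
    ∫ x, (∑ i ∈ s, c i * f i x) ^ 2 ∂μ = ∑ i ∈ s, c i ^ 2 * ∫ x, f i x * f i x ∂μ := by
  have integrable_term (i j : ι) : Integrable (fun x ↦ c i * c j * (f i x * f j x)) μ :=
    (hf.integrable_mul i j).const_mul _
  calc ∫ x, (∑ i ∈ s, c i * f i x) ^ 2 ∂μ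
      = ∫ x, ∑ i ∈ s, ∑ j ∈ s, c i * c j * (f i x * f j x) ∂μ := by
        simp only [sq, sum_mul_sum, mul_mul_mul_comm]
    _ = ∑ i ∈ s, ∑ j ∈ s, c i * c j * ∫ x, f i x * f j x ∂μ := by
        rw [integral_finsetSum _ fun i _ ↦ integrable_finsetSum _ fun j _ ↦ integrable_term i j]
        simp only [integral_finsetSum _ fun j _ ↦ integrable_term _ j, integral_const_mul]
    _ = ∑ i ∈ s, c i ^ 2 * ∫ x, f i x * f i x ∂μ := by
        refine sum_congr rfl fun i hi ↦ ?_
        rw [sum_eq_single_of_mem i hi fun j _ hji ↦ by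
          rw [hf.integral_mul_eq_zero hji.symm, mul_zero], sq]

theorem mul_sum_sq_le_of_ae_abs_sum_le [IsFiniteMeasure μ] (hf : IsOrthogonalSystem μ f)
    {s : Finset ι} {c : ι → ℝ} {δ M : ℝ} (hδ : ∀ i ∈ s, δ ≤ ∫ x, f i x * f i x ∂μ)
    (hM : ∀ᵐ x ∂μ, |∑ i ∈ s, c i * f i x| ≤ M) :
    δ * ∑ i ∈ s, c i ^ 2 ≤ M ^ 2 * μ.real Set.univ := by
  calc δ * ∑ i ∈ s, c i ^ 2
      = ∑ i ∈ s, c i ^ 2 * δ := by rw [mul_comm, sum_mul]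
    _ ≤ ∑ i ∈ s, c i ^ 2 * ∫ x, f i x * f i x ∂μ := by gcongr with i hi; exact hδ i hi
    _ = ∫ x, (∑ i ∈ s, c i * f i x) ^ 2 ∂μ := (hf.integral_sum_mul_sq s c).symm
    _ ≤ ∫ _, M ^ 2 ∂μ :=
        integral_mono_of_nonneg (ae_of_all _ fun _ ↦ sq_nonneg _) (integrable_const _)
          (hM.mono fun _ hx ↦ sq_le_sq.2 (hx.trans (le_abs_self M)))
    _ = M ^ 2 * μ.real Set.univ := by rw [integral_const, smul_eq_mul, mul_comm]

end IsOrthogonalSystem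

end OrthogonalSystem

section Chebyshev

instance isFiniteMeasure_measureT : IsFiniteMeasure measureT :=
  (integrable_const_iff_isFiniteMeasure one_ne_zero).1
    (integrable_measureT (continuousOn_const (c := (1 : ℝ))))

theorem measureT_real_univ : measureT.real Set.univ = π := by
  simpa using integral_eval_T_real_measureT_zero

theorem ae_measureT_mem_Icc : ∀ᵐ u ∂measureT, u ∈ Set.Icc (-1 : ℝ) 1 :=
  (ae_restrict_mem measurableSet_Ioc).mono fun _ hu ↦ Set.Ioc_subset_Icc_self hu

theorem isOrthogonalSystem_eval_T :
    IsOrthogonalSystem measureT fun (p : ℕ) u ↦ (T ℝ p).eval u where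
  integrable_mul _ _ := integrable_measureT (by fun_prop)
  integral_mul_eq_zero _ _ := integral_eval_T_real_mul_eval_T_real_measureT_of_ne

theorem pi_div_two_le_integral_eval_T_mul_self (p : ℕ) :
    π / 2 ≤ ∫ u, (T ℝ p).eval u * (T ℝ p).eval u ∂measureT := by
  rcases eq_or_ne p 0 with rfl | hp
  · exact (half_le_self pi_pos.le).trans_eq integral_eval_T_real_mul_self_measureT_zero.symm
  · exact (integral_T_real_mul_self_measureT_of_ne_zero hp).ge

theorem sq_pi_div_two_le_integral_eval_T_mul_eval_T_mul_self (p q : ℕ) :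
    (π / 2) ^ 2 ≤ ∫ z : ℝ × ℝ, ((T ℝ p).eval z.1 * (T ℝ q).eval z.2) *
      ((T ℝ p).eval z.1 * (T ℝ q).eval z.2) ∂measureT.prod measureT := by
  simp only [mul_mul_mul_comm ((T ℝ p).eval _)]
  rw [integral_prod_mul (fun u ↦ (T ℝ p).eval u * (T ℝ p).eval u)
    (fun v ↦ (T ℝ q).eval v * (T ℝ q).eval v), sq]
  have hp := pi_div_two_le_integral_eval_T_mul_self p
  have hq := pi_div_two_le_integral_eval_T_mul_self q
  exact mul_le_mul hp hq pi_div_two_pos.le (pi_div_two_pos.le.trans hp)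

theorem sum_sq_le_four_mul_sq_of_abs_sum_eval_T_le {s : Finset (ℕ × ℕ)} {c : ℕ × ℕ → ℝ} {M : ℝ}
    (hM : ∀ u ∈ Set.Icc (-1 : ℝ) 1, ∀ v ∈ Set.Icc (-1 : ℝ) 1,
      |∑ k ∈ s, c k * ((T ℝ k.1).eval u * (T ℝ k.2).eval v)| ≤ M) :
    ∑ k ∈ s, c k ^ 2 ≤ 4 * M ^ 2 := by
  have ae_bound : ∀ᵐ z ∂measureT.prod measureT,
      |∑ k ∈ s, c k * ((T ℝ k.1).eval z.1 * (T ℝ k.2).eval z.2)| ≤ M := by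
    filter_upwards [Measure.quasiMeasurePreserving_fst.ae ae_measureT_mem_Icc,
      Measure.quasiMeasurePreserving_snd.ae ae_measureT_mem_Icc] with z hu hv
    exact hM z.1 hu z.2 hv
  have bessel := (isOrthogonalSystem_eval_T.prod isOrthogonalSystem_eval_T)
    |>.mul_sum_sq_le_of_ae_abs_sum_le
      (fun k _ ↦ sq_pi_div_two_le_integral_eval_T_mul_eval_T_mul_self k.1 k.2) ae_bound
  rw [← Set.univ_prod_univ, measureReal_prod_prod, measureT_real_univ] at bessel
  exact le_of_mul_le_mul_left (by linarith) (pow_pos pi_pos 2)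

theorem eval_T_eq_cos_mul_arccos (n : ℤ) {u : ℝ} (hu : u ∈ Set.Icc (-1 : ℝ) 1) :
    (T ℝ n).eval u = cos (n * arccos u) := by
  rw [← T_real_cos, cos_arccos hu.1 hu.2]

end Chebyshev

/-- `Σ_{p,q=0}^{n} a_{n,p,q}² ≤ 4`. -/
theorem sum_sq_coeff_le_four
    (a : ℕ → ℕ → ℕ → ℝ)
    (ha : ∀ (n : ℕ) (x y : ℝ),
      (Polynomial.Chebyshev.T ℝ n).eval ((Real.cos x + Real.cos y) / 2) =
        ∑ p ∈ Finset.range (n + 1), ∑ q ∈ Finset.range (n + 1),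
          a n p q * Real.cos (p * x) * Real.cos (q * y))
    (n : ℕ) :
    ∑ p ∈ Finset.range (n + 1), ∑ q ∈ Finset.range (n + 1), (a n p q) ^ 2 ≤ 4 := by
  rw [← sum_product']
  suffices expansion_bound : ∀ u ∈ Set.Icc (-1 : ℝ) 1, ∀ v ∈ Set.Icc (-1 : ℝ) 1,
      |∑ k ∈ range (n + 1) ×ˢ range (n + 1),
        a n k.1 k.2 * ((T ℝ k.1).eval u * (T ℝ k.2).eval v)| ≤ 1 by
    simpa using sum_sq_le_four_mul_sq_of_abs_sum_eval_T_le expansion_bound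
  intro u hu v hv
  have expansion : (T ℝ n).eval ((u + v) / 2) = ∑ k ∈ range (n + 1) ×ˢ range (n + 1),
      a n k.1 k.2 * ((T ℝ k.1).eval u * (T ℝ k.2).eval v) := by
    simpa [sum_product, eval_T_eq_cos_mul_arccos _ hu, eval_T_eq_cos_mul_arccos _ hv,
      cos_arccos hu.1 hu.2, cos_arccos hv.1 hv.2, mul_assoc] using ha n (arccos u) (arccos v)
  rw [← expansion]
  refine abs_eval_T_real_le_one n (abs_le.2 ⟨?_, ?_⟩) <;> linarith [hu.1, hu.2, hv.1, hv.2]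
end

section
/- lim_{n→∞} ∫_{0}^{π} ( ∫_{0}^{π} T_n((cos x + cos y)/2) dy )² dx = 0. -/
open Real Filter intervalIntegral

/-!
The substitution `t = cos θ` turns `T_n` into `cos (n θ)`, so the Riemann–Lebesgue lemma gives
`∫ T_n dν → 0` for every finite measure `ν` on `[-1, 1]` with a density. For fixed `x` the inner
integral is of this form, `ν` being the law of `(cos x + cos y) / 2` with `y` uniform on `[0, π]`.
Both substitutions have a differentiable left inverse off a null set; such an inverse maps null sets
to null sets, which gives absolute continuity without computing any density. The inner integrals are
bounded by `π`, and dominated convergence finishes the proof.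
-/

open MeasureTheory Set Polynomial.Chebyshev
open scoped RealInnerProductSpace Topology

lemma quasiMeasurePreserving_restrict_of_leftInvOn {E : Type*} [NormedAddCommGroup E]
    [NormedSpace ℝ E] [FiniteDimensional ℝ E] [MeasurableSpace E] [BorelSpace E]
    {μ : Measure E} [μ.IsAddHaarMeasure] {f g : E → E} {s t : Set E}
    (hf : Measurable f) (hst : MapsTo f s t) (hg : DifferentiableOn ℝ g (f '' s))
    (hgf : LeftInvOn g f s) :
    Measure.QuasiMeasurePreserving f (μ.restrict s) (μ.restrict t) := by
  refine ⟨hf, .mk fun N hN hNt ↦ ?_⟩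
  rw [Measure.restrict_apply hN] at hNt
  rw [Measure.map_apply hf hN, Measure.restrict_apply (hf hN)]
  have preimage_subset : f ⁻¹' N ∩ s ⊆ g '' (N ∩ f '' s) :=
    fun x ⟨hxN, hxs⟩ ↦ ⟨f x, ⟨hxN, mem_image_of_mem f hxs⟩, hgf hxs⟩
  have inter_null : μ (N ∩ f '' s) = 0 :=
    measure_mono_null (inter_subset_inter_right N hst.image_subset) hNt
  exact measure_mono_null preimage_subset
    (addHaar_image_eq_zero_of_differentiableOn_of_addHaar_eq_zero μ
      (hg.mono inter_subset_right) inter_null)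

lemma quasiMeasurePreserving_arccos :
    Measure.QuasiMeasurePreserving arccos (volume.restrict (Icc (-1) 1)) volume := by
  simpa only [Measure.restrict_univ] using
    quasiMeasurePreserving_restrict_of_leftInvOn (μ := volume) measurable_arccos
      (mapsTo_univ arccos (Icc (-1) 1)) differentiable_cos.differentiableOn
      (fun _ hx ↦ cos_arccos hx.1 hx.2)

lemma mul_cos_add_mem_Icc {a b : ℝ} (hab : |a| + |b| ≤ 1) (y : ℝ) :
    a * cos y + b ∈ Icc (-1) 1 := by
  refine abs_le.1 ?_
  calc |a * cos y + b| ≤ |a| * |cos y| + |b| := by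
        simpa only [abs_mul] using abs_add_le (a * cos y) b
    _ ≤ |a| + |b| := by gcongr; exact mul_le_of_le_one_right (abs_nonneg a) (abs_cos_le_one y)
    _ ≤ 1 := hab

lemma quasiMeasurePreserving_mul_cos_add {a b : ℝ} (ha : a ≠ 0) (hab : |a| + |b| ≤ 1) :
    Measure.QuasiMeasurePreserving (fun y ↦ a * cos y + b)
      (volume.restrict (Ioc 0 π)) (volume.restrict (Icc (-1) 1)) := by
  rw [← restrict_Ioo_eq_restrict_Ioc]
  have sub_div_cancel (y : ℝ) : (a * cos y + b - b) / a = cos y := by field_simp; ring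
  refine quasiMeasurePreserving_restrict_of_leftInvOn (g := fun x ↦ arccos ((x - b) / a))
    (by fun_prop) (fun y _ ↦ mul_cos_add_mem_Icc hab y) ?_ ?_
  · rintro _ ⟨y, hy, rfl⟩
    obtain ⟨neg_one_lt, lt_one⟩ := mapsTo_cos_Ioo hy
    have arccos_diff : DifferentiableAt ℝ arccos ((a * cos y + b - b) / a) := by
      rw [sub_div_cancel]
      exact differentiableAt_arccos.2 ⟨neg_one_lt.ne', lt_one.ne⟩
    exact (arccos_diff.comp (f := fun x ↦ (x - b) / a) (a * cos y + b)
      (by fun_prop)).differentiableWithinAt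
  · intro y hy
    simp only [sub_div_cancel, arccos_cos hy.1.le hy.2.le]

lemma tendsto_charFun_cocompact_of_absolutelyContinuous {V : Type*} [NormedAddCommGroup V]
    [InnerProductSpace ℝ V] [FiniteDimensional ℝ V] [MeasurableSpace V] [BorelSpace V]
    {μ : Measure V} [IsFiniteMeasure μ] (hμ : μ ≪ volume) :
    Tendsto (charFun μ) (cocompact V) (𝓝 0) := by
  have hc : -(2 * π)⁻¹ ≠ 0 := by simp [pi_ne_zero]
  have rescale : Tendsto (fun t : V ↦ -(2 * π)⁻¹ • t) (cocompact V) (cocompact V) :=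
    (Homeomorph.smulOfNeZero _ hc).isClosedEmbedding.tendsto_cocompact
  refine ((tendsto_integral_exp_inner_smul_cocompact
    fun v ↦ ((μ.rnDeriv volume v).toReal : ℂ)).comp rescale).congr fun t ↦ ?_
  rw [charFun_apply, ← integral_rnDeriv_smul hμ]
  refine integral_congr_ae (.of_forall fun v ↦ ?_)
  have phase : 2 * π * -⟪v, -(2 * π)⁻¹ • t⟫ = ⟪v, t⟫ := by
    rw [real_inner_smul_right]
    field_simp
  simp only [Circle.smul_def, fourierChar_apply, phase, smul_eq_mul, Complex.real_smul]
  exact mul_comm _ _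

lemma tendsto_integral_cos_mul_cocompact_of_absolutelyContinuous {μ : Measure ℝ}
    [IsFiniteMeasure μ] (hμ : μ ≪ volume) :
    Tendsto (fun t ↦ ∫ x, cos (t * x) ∂μ) (cocompact ℝ) (𝓝 0) := by
  refine ((Complex.continuous_re.tendsto 0).comp
    (tendsto_charFun_cocompact_of_absolutelyContinuous hμ)).congr fun t ↦ ?_
  have integrable_exp : Integrable (fun x : ℝ ↦ Complex.exp (t * x * Complex.I)) μ := by
    refine .of_bound (by fun_prop) 1 (.of_forall fun x ↦ ?_)
    exact_mod_cast (Complex.norm_exp_ofReal_mul_I (t * x)).le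
  rw [Function.comp_apply, charFun_apply_real]
  refine (integral_re integrable_exp).symm.trans (integral_congr_ae (.of_forall fun x ↦ ?_))
  exact_mod_cast Complex.exp_ofReal_mul_I_re (t * x)

lemma tendsto_integral_eval_T_of_quasiMeasurePreserving {Ω : Type*} [MeasurableSpace Ω]
    {μ : Measure Ω} [IsFiniteMeasure μ] {X : Ω → ℝ}
    (hX : Measure.QuasiMeasurePreserving X μ (volume.restrict (Icc (-1) 1))) :
    Tendsto (fun n : ℕ ↦ ∫ ω, (T ℝ n).eval (X ω) ∂μ) atTop (𝓝 0) := by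
  have angle_qmp : Measure.QuasiMeasurePreserving (arccos ∘ X) μ volume :=
    quasiMeasurePreserving_arccos.comp hX
  have natCast_cocompact : Tendsto (fun n : ℕ ↦ (n : ℝ)) atTop (cocompact ℝ) :=
    tendsto_natCast_atTop_atTop.mono_right atTop_le_cocompact
  refine ((tendsto_integral_cos_mul_cocompact_of_absolutelyContinuous
    angle_qmp.absolutelyContinuous).comp natCast_cocompact).congr fun n ↦ ?_
  have X_mem_Icc : ∀ᵐ ω ∂μ, X ω ∈ Icc (-1) 1 := hX.ae (ae_restrict_mem measurableSet_Icc)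
  rw [Function.comp_apply, integral_map angle_qmp.aemeasurable (by fun_prop)]
  refine integral_congr_ae (X_mem_Icc.mono fun ω hω ↦ ?_)
  simpa only [Function.comp_apply, cos_arccos hω.1 hω.2, Int.cast_natCast] using
    (T_real_cos (arccos (X ω)) n).symm

lemma continuous_integral_eval_mul_cos_add (p : Polynomial ℝ) (a : ℝ) :
    Continuous fun b ↦ ∫ y in (0 : ℝ)..π, p.eval (a * cos y + b) := by
  have integrand_continuous : Continuous fun q : ℝ × ℝ ↦ p.eval (a * cos q.2 + q.1) :=
    p.continuous.comp (by fun_prop)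
  exact continuous_parametric_intervalIntegral_of_continuous' integrand_continuous 0 π

section MulCosAdd

variable {a b : ℝ}

lemma tendsto_integral_eval_T_mul_cos_add (ha : a ≠ 0) (hab : |a| + |b| ≤ 1) :
    Tendsto (fun n : ℕ ↦ ∫ y in (0 : ℝ)..π, (T ℝ n).eval (a * cos y + b)) atTop (𝓝 0) := by
  simpa only [integral_of_le pi_nonneg] using
    tendsto_integral_eval_T_of_quasiMeasurePreserving (quasiMeasurePreserving_mul_cos_add ha hab)

lemma abs_integral_eval_T_mul_cos_add_le_pi (n : ℤ) (hab : |a| + |b| ≤ 1) :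
    |∫ y in (0 : ℝ)..π, (T ℝ n).eval (a * cos y + b)| ≤ π := by
  simpa [abs_of_pos pi_pos] using
    norm_integral_le_of_norm_le_const (a := 0) (b := π) (C := 1)
      (f := fun y ↦ (T ℝ n).eval (a * cos y + b)) fun y _ ↦
      abs_eval_T_real_le_one n (abs_le.2 (mul_cos_add_mem_Icc hab y))

end MulCosAdd

/-- `lim_{n→∞} ∫_0^π ( ∫_0^π T_n((cos x + cos y)/2) dy )² dx = 0`. -/
theorem integral_sq_chebyshev_tendsto_zero :
    Filter.Tendsto (fun n : ℕ =>
        ∫ x in (0 : ℝ)..π,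
          (∫ y in (0 : ℝ)..π,
            (Polynomial.Chebyshev.T ℝ n).eval ((Real.cos x + Real.cos y) / 2)) ^ 2)
      Filter.atTop (nhds 0) := by
  have affine (x y : ℝ) : (cos x + cos y) / 2 = 1 / 2 * cos y + cos x / 2 := by ring
  have coeff_le (x : ℝ) : |(1 / 2 : ℝ)| + |cos x / 2| ≤ 1 := by
    rw [abs_div (cos x), abs_two, abs_of_pos one_half_pos]
    linarith [abs_cos_le_one x]
  suffices Tendsto (fun n : ℕ ↦ ∫ x in (0 : ℝ)..π,
      (∫ y in (0 : ℝ)..π, (T ℝ n).eval (1 / 2 * cos y + cos x / 2)) ^ 2) atTop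
      (𝓝 (∫ _ in (0 : ℝ)..π, 0)) by simpa only [affine, intervalIntegral.integral_zero] using this
  refine tendsto_integral_filter_of_dominated_convergence (fun _ ↦ π ^ 2)
    (.of_forall fun n ↦ ?measurable) (.of_forall fun n ↦ .of_forall fun x _ ↦ ?bound)
    intervalIntegrable_const (.of_forall fun x _ ↦ ?pointwise)
  case measurable =>
    exact (((continuous_integral_eval_mul_cos_add (T ℝ n) (1 / 2)).comp
      (continuous_cos.div_const 2)).pow 2).aestronglyMeasurable
  case bound =>
    rw [norm_pow]
    gcongr
    exact abs_integral_eval_T_mul_cos_add_le_pi n (coeff_le x)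
  case pointwise =>
    simpa using (tendsto_integral_eval_T_mul_cos_add one_half_pos.ne' (coeff_le x)).pow 2
end

section
/- For every fixed x ∈ (0,π), lim_{n→∞} ∫_{0}^{π} T_n((cos x + cos y)/2) dy = 0. -/
open Real Filter intervalIntegral

/-!
On `[-1, 1]` we have `T_n u = cos (n * arccos u)`, so integrating `T_n` against a finite measure
`ν` on `[-1, 1]` gives the real part of the characteristic function of `ν.map arccos` at `n`.
If `ν` is absolutely continuous, so is this pushforward, since `arccos` has nonzero derivative on
`(-1, 1)`, and the Riemann–Lebesgue lemma applies. Here `ν` is the pushforward of Lebesgue measure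
on `[0, π]` under `y ↦ (cos x + cos y) / 2`, which is absolutely continuous for the same reason: the
derivative `-sin y / 2` vanishes on a countable set only.
-/

section

open MeasureTheory Measure Set
open scoped ENNReal NNReal Topology RealInnerProductSpace FourierTransform

section NonsingularMaps

variable {E : Type*} [NormedAddCommGroup E] [NormedSpace ℝ E] [FiniteDimensional ℝ E]
  [MeasurableSpace E] [BorelSpace E] {μ ν : Measure E} [μ.IsAddHaarMeasure]

lemma exists_nhds_addHaar_inter_preimage_eq_zero {f : E → E} {f' : E →L[ℝ] E} {x : E} {N : Set E}
    (hf : HasStrictFDerivAt f f' x) (hf' : f'.det ≠ 0) (hN : μ N = 0) :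
    ∃ u ∈ 𝓝 x, μ (u ∩ f ⁻¹' N) = 0 := by
  obtain ⟨m, hm_pos, hm_lt⟩ : ∃ m : ℝ≥0, 0 < (m : ℝ≥0∞) ∧ (m : ℝ≥0∞) < ENNReal.ofReal |f'.det| :=
    ENNReal.lt_iff_exists_nnreal_btwn.1 (ENNReal.ofReal_pos.2 (abs_pos.2 hf'))
  obtain ⟨δ, h_expand, hδ⟩ :=
    ((mul_le_addHaar_image_of_lt_det μ f' hm_lt).and self_mem_nhdsWithin).exists
  obtain ⟨u, hu, h_approx⟩ := hf.approximates_deriv_on_nhds (Or.inr hδ)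
  refine ⟨u, hu, ?_⟩
  have h_le : m * μ (u ∩ f ⁻¹' N) ≤ 0 :=
    calc m * μ (u ∩ f ⁻¹' N) ≤ μ (f '' (u ∩ f ⁻¹' N)) :=
          h_expand _ f (h_approx.mono_set inter_subset_left)
      _ ≤ μ N := measure_mono (image_subset_iff.2 inter_subset_right)
      _ = 0 := hN
  exact (mul_eq_zero.1 (nonpos_iff_eq_zero.1 h_le)).resolve_left hm_pos.ne'

theorem quasiMeasurePreserving_of_hasStrictFDerivAt {f : E → E} {f' : E → E →L[ℝ] E}
    (hfm : Measurable f) (hν : ν ≪ μ)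
    (hf : ∀ᵐ x ∂ν, HasStrictFDerivAt f (f' x) x ∧ (f' x).det ≠ 0) :
    QuasiMeasurePreserving f ν μ := by
  refine ⟨hfm, AbsolutelyContinuous.mk fun N hNm hN ↦ ?_⟩
  rw [map_apply hfm hNm]
  set G := {x | HasStrictFDerivAt f (f' x) x ∧ (f' x).det ≠ 0}
  have h_good : μ (G ∩ f ⁻¹' N) = 0 := by
    refine measure_null_of_locally_null _ fun x hx ↦ ?_
    obtain ⟨u, hu, hu_null⟩ := exists_nhds_addHaar_inter_preimage_eq_zero hx.1.1 hx.1.2 hN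
    refine ⟨G ∩ f ⁻¹' N ∩ u, inter_mem_nhdsWithin _ hu, measure_mono_null ?_ hu_null⟩
    exact fun y hy ↦ ⟨hy.2, hy.1.2⟩
  have h_ae : f ⁻¹' N =ᵐ[ν] (G ∩ f ⁻¹' N : Set E) := by
    filter_upwards [hf] with x hx
    exact propext ⟨fun h ↦ ⟨hx, h⟩, fun h ↦ h.2⟩
  rw [measure_congr h_ae]
  exact hν h_good

theorem quasiMeasurePreserving_of_hasStrictDerivAt {ν : Measure ℝ} {f f' : ℝ → ℝ}
    (hfm : Measurable f) (hν : ν ≪ volume)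
    (hf : ∀ᵐ x ∂ν, HasStrictDerivAt f (f' x) x ∧ f' x ≠ 0) :
    QuasiMeasurePreserving f ν volume := by
  refine quasiMeasurePreserving_of_hasStrictFDerivAt
    (f' := fun x ↦ ContinuousLinearMap.toSpanSingleton ℝ (f' x)) hfm hν ?_
  simpa only [ContinuousLinearMap.det_toSpanSingleton, hasStrictDerivAt_iff_hasStrictFDerivAt]
    using hf

end NonsingularMaps

section RiemannLebesgue

variable {V : Type*} [NormedAddCommGroup V] [InnerProductSpace ℝ V] [FiniteDimensional ℝ V]
  [MeasurableSpace V] [BorelSpace V]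

lemma charFun_eq_fourier_rnDeriv {ν : Measure V} [SigmaFinite ν] (hν : ν ≪ volume) (t : V) :
    charFun ν t = 𝓕 (fun v ↦ ((ν.rnDeriv volume v).toReal : ℂ)) (-(2 * π)⁻¹ • t) := by
  rw [charFun_apply, ← integral_rnDeriv_smul hν, Real.fourier_eq']
  congr 1 with v
  have h_phase : -2 * π * ⟪v, -(2 * π)⁻¹ • t⟫ = ⟪v, t⟫ := by
    rw [real_inner_smul_right]
    field_simp
  rw [h_phase, Complex.real_smul, smul_eq_mul, mul_comm]

theorem tendsto_charFun_cocompact_s7 {ν : Measure V} [IsFiniteMeasure ν] (hν : ν ≪ volume) :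
    Tendsto (charFun ν) (cocompact V) (𝓝 0) := by
  have h_scale : Tendsto (fun t : V ↦ -(2 * π)⁻¹ • t) (cocompact V) (cocompact V) :=
    (Homeomorph.smulOfNeZero (-(2 * π)⁻¹)
      (by simp [pi_ne_zero])).isClosedEmbedding.tendsto_cocompact
  rw [funext (charFun_eq_fourier_rnDeriv hν)]
  exact (tendsto_integral_exp_inner_smul_cocompact _).comp h_scale

end RiemannLebesgue

lemma integral_cos_mul_eq_re_charFun (ν : Measure ℝ) [IsFiniteMeasure ν] (t : ℝ) :
    ∫ θ, cos (t * θ) ∂ν = (charFun ν t).re := by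
  have h_int : Integrable (fun θ : ℝ ↦ Complex.exp (t * θ * Complex.I)) ν := by
    refine Integrable.of_bound (by fun_prop) 1 (.of_forall fun θ ↦ ?_)
    rw [← Complex.ofReal_mul, Complex.norm_exp_ofReal_mul_I]
  rw [charFun_apply_real, ← RCLike.re_eq_complex_re, ← integral_re h_int]
  simp only [RCLike.re_eq_complex_re, ← Complex.ofReal_mul, Complex.exp_ofReal_mul_I_re]

lemma eval_chebyshevT_eq_cos_arccos (n : ℤ) {u : ℝ} (hu : u ∈ Icc (-1) 1) :
    (Polynomial.Chebyshev.T ℝ n).eval u = cos (n * arccos u) := by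
  rw [← Polynomial.Chebyshev.T_real_cos, cos_arccos hu.1 hu.2]

lemma quasiMeasurePreserving_arccos_s7 {ν : Measure ℝ} (hν : ν ≪ volume)
    (h_supp : ∀ᵐ u ∂ν, u ∈ Icc (-1 : ℝ) 1) : QuasiMeasurePreserving arccos ν volume := by
  refine quasiMeasurePreserving_of_hasStrictDerivAt (f' := fun u ↦ -(1 / √(1 - u ^ 2)))
    measurable_arccos hν ?_
  filter_upwards [h_supp, hν.ae_le (ae_ne volume (-1 : ℝ)), hν.ae_le (ae_ne volume (1 : ℝ))]
    with u hu hu_neg_one hu_one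
  refine ⟨hasStrictDerivAt_arccos hu_neg_one hu_one, ?_⟩
  have h_pos : 0 < 1 - u ^ 2 := by
    nlinarith [lt_of_le_of_ne hu.1 hu_neg_one.symm, lt_of_le_of_ne hu.2 hu_one]
  exact neg_ne_zero.2 (one_div_ne_zero (sqrt_pos.2 h_pos).ne')

theorem tendsto_integral_chebyshevT {ν : Measure ℝ} [IsFiniteMeasure ν] (hν : ν ≪ volume)
    (h_supp : ∀ᵐ u ∂ν, u ∈ Icc (-1 : ℝ) 1) :
    Tendsto (fun n : ℕ ↦ ∫ u, (Polynomial.Chebyshev.T ℝ n).eval u ∂ν) atTop (𝓝 0) := by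
  have h_arccos := quasiMeasurePreserving_arccos_s7 hν h_supp
  have h_eq (n : ℕ) : ∫ u, (Polynomial.Chebyshev.T ℝ n).eval u ∂ν
      = (charFun (ν.map arccos) n).re :=
    calc ∫ u, (Polynomial.Chebyshev.T ℝ n).eval u ∂ν = ∫ u, cos (n * arccos u) ∂ν :=
          integral_congr_ae (h_supp.mono fun u hu ↦ eval_chebyshevT_eq_cos_arccos n hu)
      _ = ∫ θ, cos (n * θ) ∂ν.map arccos := by
          rw [integral_map measurable_arccos.aemeasurable (by fun_prop)]
      _ = (charFun (ν.map arccos) n).re := integral_cos_mul_eq_re_charFun _ _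
  have h_nat : Tendsto (fun n : ℕ ↦ (n : ℝ)) atTop (cocompact ℝ) :=
    tendsto_natCast_atTop_atTop.mono_right atTop_le_cocompact
  simp only [h_eq]
  exact (Complex.continuous_re.tendsto 0).comp
    ((tendsto_charFun_cocompact_s7 h_arccos.absolutelyContinuous).comp h_nat)

lemma ae_sin_ne_zero : ∀ᵐ y : ℝ, sin y ≠ 0 := by
  have h_countable : {y | sin y = 0}.Countable :=
    (countable_range fun k : ℤ ↦ k * π).mono fun _ hy ↦ sin_eq_zero_iff.1 hy
  exact h_countable.ae_notMem volume

lemma quasiMeasurePreserving_add_cos_div_two (c : ℝ) :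
    QuasiMeasurePreserving (fun y : ℝ ↦ (c + cos y) / 2) volume volume := by
  refine quasiMeasurePreserving_of_hasStrictDerivAt (f' := fun y ↦ -sin y / 2) (by fun_prop)
    .rfl ?_
  filter_upwards [ae_sin_ne_zero] with y hy
  exact ⟨((hasStrictDerivAt_cos y).const_add c).div_const 2, by simpa using hy⟩

theorem integral_chebyshev_tendsto_zero_general (x : ℝ) {μ : Measure ℝ} [IsFiniteMeasure μ]
    (hμ : μ ≪ volume) :
    Tendsto (fun n : ℕ ↦ ∫ y, (Polynomial.Chebyshev.T ℝ n).eval ((cos x + cos y) / 2) ∂μ)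
      atTop (𝓝 0) := by
  have h_mean : QuasiMeasurePreserving (fun y ↦ (cos x + cos y) / 2) μ volume :=
    (quasiMeasurePreserving_add_cos_div_two (cos x)).mono_left hμ
  have h_supp : ∀ᵐ u ∂μ.map (fun y ↦ (cos x + cos y) / 2), u ∈ Icc (-1 : ℝ) 1 := by
    refine (ae_map_iff h_mean.measurable.aemeasurable measurableSet_Icc).2 (.of_forall fun y ↦ ?_)
    constructor <;> linarith [neg_one_le_cos x, cos_le_one x, neg_one_le_cos y, cos_le_one y]
  refine (tendsto_integral_chebyshevT h_mean.absolutelyContinuous h_supp).congr fun n ↦ ?_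
  exact integral_map h_mean.measurable.aemeasurable
    (Polynomial.continuous _).aestronglyMeasurable

end

/-- for fixed `x ∈ (0,π)`, `lim_{n→∞} ∫_0^π T_n((cos x + cos y)/2) dy = 0`. -/
theorem integral_chebyshev_tendsto_zero
    (x : ℝ) (hx : x ∈ Set.Ioo 0 π) :
    Filter.Tendsto (fun n : ℕ =>
        ∫ y in (0 : ℝ)..π,
          (Polynomial.Chebyshev.T ℝ n).eval ((Real.cos x + Real.cos y) / 2))
      Filter.atTop (nhds 0) := by
  simp only [integral_of_le pi_pos.le]
  exact integral_chebyshev_tendsto_zero_general x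
    MeasureTheory.Measure.absolutelyContinuous_restrict
end

section
/- For every x ∈ (0,π) and every n ∈ ℕ, ∫_{0}^{π} T_n((cos x + cos y)/2) dy = 2 ∫_{I_x} cos(n z) · sin z / √(1 − (2 cos z − cos x)²) dz, where I_x = [arccos((cos x + 1)/2), arccos((cos x − 1)/2)]. -/
open Real Filter intervalIntegral

/-!
Both sides are the integral of `T_n(t) / √(1/4 - (t - cos x / 2)²)` over
`[(cos x - 1)/2, (cos x + 1)/2]`: on the left `t = (cos x + cos y)/2`, on the right `t = cos z`.
Since `cos` is monotone on `[0, π]`, neither substitution needs integrability or continuity of the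
integrand, so the singularities at the endpoints are harmless.
-/

section CosineSubstitution

variable {E : Type*} [NormedAddCommGroup E] [NormedSpace ℝ E]

theorem integral_sin_smul_comp_cos {a b : ℝ} (ha : a ∈ Set.Icc 0 π) (hb : b ∈ Set.Icc 0 π)
    (g : ℝ → E) : ∫ θ in a..b, sin θ • g (cos θ) = ∫ t in cos b..cos a, g t := by
  have neg_sin_nonpos : ∀ θ ∈ Set.Ioo (min a b) (max a b), -sin θ ≤ 0 := fun θ hθ ↦
    neg_nonpos.2 <| sin_nonneg_of_nonneg_of_le_pi ((le_min ha.1 hb.1).trans hθ.1.le)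
      (hθ.2.le.trans (max_le ha.2 hb.2))
  have substitution := integral_deriv_smul_comp_of_deriv_nonpos (g := g)
    continuous_cos.continuousOn (fun θ _ ↦ hasDerivAt_cos θ) neg_sin_nonpos
  simp only [neg_smul, intervalIntegral.integral_neg, Function.comp_apply] at substitution
  rw [integral_symm (cos a), ← substitution, neg_neg]

theorem integral_sin_smul_comp_cos_arccos {u v : ℝ} (hu : u ∈ Set.Icc (-1) 1)
    (hv : v ∈ Set.Icc (-1) 1) (g : ℝ → E) :
    ∫ θ in arccos v..arccos u, sin θ • g (cos θ) = ∫ t in u..v, g t := by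
  rw [integral_sin_smul_comp_cos ⟨arccos_nonneg v, arccos_le_pi v⟩
    ⟨arccos_nonneg u, arccos_le_pi u⟩, cos_arccos hu.1 hu.2, cos_arccos hv.1 hv.2]

theorem sqrt_sq_sub_mul_cos_sq {r θ : ℝ} (hr : 0 ≤ r) (hθ : θ ∈ Set.Icc 0 π) :
    √(r ^ 2 - (r * cos θ) ^ 2) = r * sin θ := by
  have sin_nonneg : 0 ≤ sin θ := sin_nonneg_of_mem_Icc hθ
  rw [show r ^ 2 - (r * cos θ) ^ 2 = (r * sin θ) ^ 2 by rw [mul_pow, mul_pow, sin_sq]; ring,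
    sqrt_sq (mul_nonneg hr sin_nonneg)]

theorem integral_comp_add_mul_cos (m : ℝ) {r : ℝ} (hr : 0 < r) (g : ℝ → E) :
    ∫ θ in 0..π, g (m + r * cos θ) =
      ∫ t in (m - r)..(m + r), (√(r ^ 2 - (t - m) ^ 2))⁻¹ • g t := by
  have integrand_eq : ∀ θ ∈ Set.Ioo 0 π, g (m + r * cos θ) =
      r • sin θ • (√(r ^ 2 - (m + r * cos θ - m) ^ 2))⁻¹ • g (m + r * cos θ) := fun θ hθ ↦ by
    have sin_pos : 0 < sin θ := sin_pos_of_mem_Ioo hθ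
    rw [add_sub_cancel_left, sqrt_sq_sub_mul_cos_sq hr.le (Set.Ioo_subset_Icc_self hθ),
      smul_smul, smul_smul, mul_inv_cancel₀ (mul_pos hr sin_pos).ne', one_smul]
  calc ∫ θ in 0..π, g (m + r * cos θ)
      = ∫ θ in 0..π, r • sin θ •
          (√(r ^ 2 - (m + r * cos θ - m) ^ 2))⁻¹ • g (m + r * cos θ) := by
        simp only [integral_of_le pi_pos.le, MeasureTheory.integral_Ioc_eq_integral_Ioo]
        exact MeasureTheory.setIntegral_congr_fun measurableSet_Ioo integrand_eq
    _ = r • ∫ s in (-1)..1, (√(r ^ 2 - (m + r * s - m) ^ 2))⁻¹ • g (m + r * s) := by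
        rw [intervalIntegral.integral_smul, integral_sin_smul_comp_cos
          (g := fun s ↦ (√(r ^ 2 - (m + r * s - m) ^ 2))⁻¹ • g (m + r * s))
          (Set.left_mem_Icc.2 pi_pos.le) (Set.right_mem_Icc.2 pi_pos.le), cos_pi, cos_zero]
    _ = ∫ t in (m - r)..(m + r), (√(r ^ 2 - (t - m) ^ 2))⁻¹ • g t := by
        rw [smul_integral_comp_add_mul (fun t ↦ (√(r ^ 2 - (t - m) ^ 2))⁻¹ • g t), mul_neg,
          mul_one, ← sub_eq_add_neg]

end CosineSubstitution

theorem sqrt_half_sq_sub_sub_half_sq (t c : ℝ) :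
    √((1 / 2) ^ 2 - (t - c / 2) ^ 2) = √(1 - (2 * t - c) ^ 2) / 2 := by
  rw [show (1 / 2 : ℝ) ^ 2 - (t - c / 2) ^ 2 = (1 - (2 * t - c) ^ 2) / 2 ^ 2 by ring,
    sqrt_div' _ (by positivity), sqrt_sq two_pos.le]

theorem integral_chebyshev_change_of_variables_general (x : ℝ) (n : ℤ) :
    ∫ y in 0..π, (Polynomial.Chebyshev.T ℝ n).eval ((cos x + cos y) / 2) =
      2 * ∫ z in arccos ((cos x + 1) / 2)..arccos ((cos x - 1) / 2),
        cos (n * z) * sin z / √(1 - (2 * cos z - cos x) ^ 2) := by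
  have lower_mem : (cos x - 1) / 2 ∈ Set.Icc (-1) 1 := by
    constructor <;> linarith [neg_one_le_cos x, cos_le_one x]
  have upper_mem : (cos x + 1) / 2 ∈ Set.Icc (-1) 1 := by
    constructor <;> linarith [neg_one_le_cos x, cos_le_one x]
  calc ∫ y in 0..π, (Polynomial.Chebyshev.T ℝ n).eval ((cos x + cos y) / 2)
      = ∫ y in 0..π, (Polynomial.Chebyshev.T ℝ n).eval (cos x / 2 + 1 / 2 * cos y) := by
        ring_nf
    _ = ∫ t in ((cos x - 1) / 2)..((cos x + 1) / 2),
          (√((1 / 2) ^ 2 - (t - cos x / 2) ^ 2))⁻¹ • (Polynomial.Chebyshev.T ℝ n).eval t := by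
        rw [integral_comp_add_mul_cos _ one_half_pos ((Polynomial.Chebyshev.T ℝ n).eval ·),
          ← sub_div, ← add_div]
    _ = ∫ z in arccos ((cos x + 1) / 2)..arccos ((cos x - 1) / 2), sin z •
          (√((1 / 2) ^ 2 - (cos z - cos x / 2) ^ 2))⁻¹ •
            (Polynomial.Chebyshev.T ℝ n).eval (cos z) :=
        (integral_sin_smul_comp_cos_arccos lower_mem upper_mem _).symm
    _ = 2 * ∫ z in arccos ((cos x + 1) / 2)..arccos ((cos x - 1) / 2),
          cos (n * z) * sin z / √(1 - (2 * cos z - cos x) ^ 2) := by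
        rw [← intervalIntegral.integral_const_mul]
        congr 1 with z
        rw [Polynomial.Chebyshev.T_real_cos, sqrt_half_sq_sub_sub_half_sq, inv_div, smul_eq_mul,
          smul_eq_mul]
        ring

/-- for `x ∈ (0,π)` and `n ∈ ℕ`,
`∫_0^π T_n((cos x + cos y)/2) dy
  = 2 ∫_{I_x} cos(n z) sin z / √(1 − (2 cos z − cos x)²) dz`,
where `I_x = [arccos((cos x + 1)/2), arccos((cos x − 1)/2)]`. -/
theorem integral_chebyshev_change_of_variables
    (x : ℝ) (hx : x ∈ Set.Ioo 0 π) (n : ℕ) :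
    (∫ y in (0 : ℝ)..π,
        (Polynomial.Chebyshev.T ℝ n).eval ((Real.cos x + Real.cos y) / 2)) =
      2 * ∫ z in (Real.arccos ((Real.cos x + 1) / 2))..(Real.arccos ((Real.cos x - 1) / 2)),
        Real.cos (n * z) * Real.sin z / Real.sqrt (1 - (2 * Real.cos z - Real.cos x) ^ 2) := by
  exact_mod_cast integral_chebyshev_change_of_variables_general x n
end

section
/- For all K, L ∈ ℕ, lim_{ε→0⁺} sup_{n ≥ 1} (1/n^{2(K+L)}) ∫_{B_ε} ( Σ_{p,q=0}^{n} a_{n,p,q} p^K q^L ξ_K(p x) ξ_L(q y) )² dx dy = 0. -/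
open Real MeasureTheory Finset Filter

/-- `A_ε = {(x,y) ∈ [0,2π]² : |(cos x + cos y)/2| ≤ 1 − ε}`. -/
def goodSet (ε : ℝ) : Set (ℝ × ℝ) :=
  {z | z ∈ Set.Icc (0 : ℝ) (2 * π) ×ˢ Set.Icc (0 : ℝ) (2 * π) ∧
    |(Real.cos z.1 + Real.cos z.2) / 2| ≤ 1 - ε}

/-- `B_ε = [0,2π]² \ A_ε`. -/
def badSet (ε : ℝ) : Set (ℝ × ℝ) :=
  (Set.Icc (0 : ℝ) (2 * π) ×ˢ Set.Icc (0 : ℝ) (2 * π)) \ goodSet ε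

/-!
A finite cosine sum with frequencies at most `n` extends to an entire function of exponential type
`n`. If it is bounded by `M` on the real line, Phragmén–Lindelöf bounds the extension by
`M * exp (n * |Im z|)`, and Cauchy's estimate on circles of radius `1 / n` gives a Bernstein
inequality: the `K`-th derivative is at most `K! * e * M * n ^ K`. Applied in each variable
separately, it bounds the normalised integrand by a constant that does not depend on `n`, while the
regions `B_ε` decrease to a null set.
-/

section ExponentialType

variable {E : Type*} [NormedAddCommGroup E] [NormedSpace ℂ E] {f : ℂ → E} {A M σ : ℝ}

-- Phragmén–Lindelöf in the right half-plane for `w ↦ exp (-σ w) • f (w I)`.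
lemma norm_le_mul_exp_im_of_norm_ofReal_le (hf : Differentiable ℂ f)
    (htype : ∀ z, ‖f z‖ ≤ A * exp (σ * |z.im|)) (hreal : ∀ x : ℝ, ‖f x‖ ≤ M)
    {z : ℂ} (hz : 0 ≤ z.im) : ‖f z‖ ≤ M * exp (σ * z.im) := by
  set g : ℂ → E := fun w ↦ Complex.exp (-σ * w) • f (w * Complex.I) with hg
  have norm_g (w : ℂ) : ‖g w‖ = exp (-(σ * w.re)) * ‖f (w * Complex.I)‖ := by
    simp [hg, norm_smul, Complex.norm_exp]
  have g_differentiable : Differentiable ℂ g := by fun_prop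
  have norm_g_le_A {w : ℂ} (hw : 0 ≤ w.re) : ‖g w‖ ≤ A := by
    calc ‖g w‖ ≤ exp (-(σ * w.re)) * (A * exp (σ * w.re)) := by
          rw [norm_g]
          gcongr
          simpa [abs_of_nonneg hw] using htype (w * Complex.I)
      _ = A := by rw [mul_left_comm, ← exp_add]; simp
  have norm_g_le_M {w : ℂ} (hw : 0 ≤ w.re) : ‖g w‖ ≤ M := by
    refine PhragmenLindelof.right_half_plane_of_bounded_on_real g_differentiable.diffContOnCl
      ⟨1, one_lt_two, 0, ?_⟩ ?_ (fun y ↦ ?_) hw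
    · refine Asymptotics.IsBigO.of_bound A (eventually_inf_principal.2 (.of_forall fun v hv ↦ ?_))
      simpa using norm_g_le_A (le_of_lt hv)
    · exact isBoundedUnder_of_eventually_le
        ((eventually_ge_atTop 0).mono fun x hx ↦ norm_g_le_A (by simpa using hx))
    · have : (y * Complex.I * Complex.I : ℂ) = ((-y : ℝ) : ℂ) := by simp [mul_assoc]
      simpa [norm_g, this] using hreal (-y)
  have norm_g_rotated := norm_g_le_M (w := -(z * Complex.I)) (by simpa using hz)
  rw [norm_g] at norm_g_rotated
  simp only [Complex.neg_re, Complex.mul_I_re, neg_neg, neg_mul, mul_assoc, Complex.I_mul_I,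
    mul_neg_one] at norm_g_rotated
  rwa [exp_neg, inv_mul_le_iff₀ (exp_pos _), mul_comm] at norm_g_rotated

lemma norm_le_mul_exp_abs_im_of_norm_ofReal_le (hf : Differentiable ℂ f)
    (htype : ∀ z, ‖f z‖ ≤ A * exp (σ * |z.im|)) (hreal : ∀ x : ℝ, ‖f x‖ ≤ M) (z : ℂ) :
    ‖f z‖ ≤ M * exp (σ * |z.im|) := by
  rcases le_total 0 z.im with hz | hz
  · rw [abs_of_nonneg hz]
    exact norm_le_mul_exp_im_of_norm_ofReal_le hf htype hreal hz
  · have := norm_le_mul_exp_im_of_norm_ofReal_le (f := fun w ↦ f (-w)) (z := -z) (by fun_prop)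
      (fun w ↦ by simpa using htype (-w)) (fun x ↦ by simpa using hreal (-x)) (by simpa using hz)
    simpa [abs_of_nonpos hz] using this

lemma norm_iteratedDeriv_ofReal_le_of_exponential_type [CompleteSpace E] (hf : Differentiable ℂ f)
    (hσ : 0 < σ) (htype : ∀ z, ‖f z‖ ≤ A * exp (σ * |z.im|)) (hreal : ∀ x : ℝ, ‖f x‖ ≤ M)
    (k : ℕ) (x : ℝ) : ‖iteratedDeriv k f x‖ ≤ k.factorial * exp 1 * M * σ ^ k := by
  have hM : 0 ≤ M := (norm_nonneg _).trans (hreal 0)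
  have norm_le_on_circle : ∀ z ∈ Metric.sphere (x : ℂ) σ⁻¹, ‖f z‖ ≤ M * exp 1 := by
    intro z hz
    have abs_im_le : |z.im| ≤ σ⁻¹ := by
      simpa [← mem_sphere_iff_norm.1 hz] using Complex.abs_im_le_norm (z - x)
    calc ‖f z‖ ≤ M * exp (σ * |z.im|) :=
          norm_le_mul_exp_abs_im_of_norm_ofReal_le hf htype hreal z
      _ ≤ M * exp (σ * σ⁻¹) := by gcongr
      _ = M * exp 1 := by rw [mul_inv_cancel₀ hσ.ne']
  refine (Complex.norm_iteratedDeriv_le_of_forall_mem_sphere_norm_le k (inv_pos.2 hσ)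
    hf.diffContOnCl norm_le_on_circle).trans_eq ?_
  rw [inv_pow, div_inv_eq_mul]
  ring

end ExponentialType

section RealRestriction

lemma iteratedDeriv_ofReal_of_eq_ofReal {f : ℂ → ℂ} {g : ℝ → ℝ} (hf : Differentiable ℂ f)
    (hfg : ∀ x : ℝ, f x = g x) (k : ℕ) (x : ℝ) : iteratedDeriv k f x = iteratedDeriv k g x := by
  induction k generalizing f g with
  | zero => simpa using hfg x
  | succ k ih =>
    rw [iteratedDeriv_succ', iteratedDeriv_succ']
    refine ih (hf.contDiff.differentiable_deriv_two) fun y ↦ ?_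
    have g_eq_re : g = fun y : ℝ ↦ (f y).re := funext fun y ↦ by simp [hfg]
    have g_differentiable : DifferentiableAt ℝ g y :=
      g_eq_re ▸ (hf y).hasDerivAt.real_of_complex.differentiableAt
    have f_hasDerivAt : HasDerivAt (fun y : ℝ ↦ (g y : ℂ)) (deriv f y) y := by
      simpa only [hfg] using (hf y).hasDerivAt.comp_ofReal
    exact f_hasDerivAt.unique g_differentiable.hasDerivAt.ofReal_comp

lemma abs_iteratedDeriv_le_of_exponential_type {f : ℂ → ℂ} {g : ℝ → ℝ} {A M σ : ℝ}
    (hf : Differentiable ℂ f) (hfg : ∀ x : ℝ, f x = g x) (hσ : 0 < σ)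
    (htype : ∀ z, ‖f z‖ ≤ A * exp (σ * |z.im|)) (hg : ∀ x, |g x| ≤ M) (k : ℕ) (x : ℝ) :
    |iteratedDeriv k g x| ≤ k.factorial * exp 1 * M * σ ^ k := by
  have := norm_iteratedDeriv_ofReal_le_of_exponential_type hf hσ htype
    (fun y ↦ by simpa [hfg] using hg y) k x
  rwa [iteratedDeriv_ofReal_of_eq_ofReal hf hfg, Complex.norm_real, norm_eq_abs] at this

end RealRestriction

section CosineSums

lemma norm_complex_cos_le_exp_abs_im (z : ℂ) : ‖Complex.cos z‖ ≤ exp |z.im| := by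
  calc ‖Complex.cos z‖
      ≤ (‖Complex.exp (z * Complex.I)‖ + ‖Complex.exp (-z * Complex.I)‖) / 2 := by
        rw [Complex.cos, norm_div, Complex.norm_ofNat]
        gcongr
        exact norm_add_le _ _
    _ = (exp (-z.im) + exp z.im) / 2 := by simp [Complex.norm_exp]
    _ ≤ (exp |z.im| + exp |z.im|) / 2 := by
        gcongr
        exacts [neg_le_abs _, le_abs_self _]
    _ = exp |z.im| := by ring

variable {ι κ : Type*} {s : Finset ι} {t : Finset κ} {σ τ M : ℝ}

lemma norm_sum_mul_complex_cos_le {c freq : ι → ℝ} (hfreq : ∀ i ∈ s, |freq i| ≤ σ) (z : ℂ) :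
    ‖∑ i ∈ s, (c i : ℂ) * Complex.cos (freq i * z)‖ ≤ (∑ i ∈ s, |c i|) * exp (σ * |z.im|) := by
  rw [sum_mul]
  refine norm_sum_le_of_le s fun i hi ↦ ?_
  rw [norm_mul, Complex.norm_real, norm_eq_abs]
  gcongr
  calc ‖Complex.cos (freq i * z)‖ ≤ exp |((freq i : ℂ) * z).im| :=
        norm_complex_cos_le_exp_abs_im _
    _ ≤ exp (σ * |z.im|) := by
        rw [Complex.im_ofReal_mul, abs_mul]
        gcongr
        exact hfreq i hi

lemma iteratedDeriv_sum_mul_cos (c freq : ι → ℝ) (k : ℕ) (x : ℝ) :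
    iteratedDeriv k (fun y ↦ ∑ i ∈ s, c i * cos (freq i * y)) x =
      ∑ i ∈ s, c i * freq i ^ k * iteratedDeriv k cos (freq i * x) := by
  rw [iteratedDeriv_fun_sum fun i _ ↦ by fun_prop]
  refine sum_congr rfl fun i _ ↦ ?_
  rw [iteratedDeriv_const_mul_field, iteratedDeriv_comp_const_mul contDiff_cos, mul_assoc]

lemma abs_sum_mul_iteratedDeriv_cos_le {c freq : ι → ℝ} (hσ : 0 < σ)
    (hfreq : ∀ i ∈ s, |freq i| ≤ σ) (hM : ∀ x, |∑ i ∈ s, c i * cos (freq i * x)| ≤ M)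
    (k : ℕ) (x : ℝ) :
    |∑ i ∈ s, c i * freq i ^ k * iteratedDeriv k cos (freq i * x)| ≤
      k.factorial * exp 1 * M * σ ^ k := by
  rw [← iteratedDeriv_sum_mul_cos]
  exact abs_iteratedDeriv_le_of_exponential_type
    (f := fun z ↦ ∑ i ∈ s, (c i : ℂ) * Complex.cos (freq i * z)) (by fun_prop)
    (fun y ↦ by push_cast; rfl) hσ (norm_sum_mul_complex_cos_le hfreq) hM k x

lemma abs_sum_sum_mul_iteratedDeriv_cos_le {a : ι → κ → ℝ} {freq₁ : ι → ℝ} {freq₂ : κ → ℝ}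
    (hσ : 0 < σ) (hτ : 0 < τ) (hfreq₁ : ∀ i ∈ s, |freq₁ i| ≤ σ) (hfreq₂ : ∀ j ∈ t, |freq₂ j| ≤ τ)
    (hM : ∀ x y, |∑ i ∈ s, ∑ j ∈ t, a i j * cos (freq₁ i * x) * cos (freq₂ j * y)| ≤ M)
    (k l : ℕ) (x y : ℝ) :
    |∑ i ∈ s, ∑ j ∈ t, a i j * freq₁ i ^ k * freq₂ j ^ l *
        iteratedDeriv k cos (freq₁ i * x) * iteratedDeriv l cos (freq₂ j * y)| ≤
      k.factorial * l.factorial * exp 2 * M * σ ^ k * τ ^ l := by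
  have bound_in_x (y : ℝ) :
      |∑ i ∈ s, (∑ j ∈ t, a i j * cos (freq₂ j * y)) * freq₁ i ^ k *
        iteratedDeriv k cos (freq₁ i * x)| ≤ k.factorial * exp 1 * M * σ ^ k := by
    refine abs_sum_mul_iteratedDeriv_cos_le hσ hfreq₁ (fun x ↦ ?_) k x
    simpa only [sum_mul, mul_right_comm] using hM x y
  have bound_in_y := abs_sum_mul_iteratedDeriv_cos_le (s := t) (freq := freq₂)
    (c := fun j ↦ ∑ i ∈ s, a i j * freq₁ i ^ k * iteratedDeriv k cos (freq₁ i * x)) hτ hfreq₂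
    (fun y ↦ by
      convert bound_in_x y using 2
      simp only [sum_mul]
      rw [sum_comm]
      exact sum_congr rfl fun i _ ↦ sum_congr rfl fun j _ ↦ by ring) l y
  convert bound_in_y using 1
  · congr 1
    simp only [sum_mul]
    rw [sum_comm]
    exact sum_congr rfl fun j _ ↦ sum_congr rfl fun i _ ↦ by ring
  · rw [← one_add_one_eq_two, exp_add]
    ring

end CosineSums

section BoundaryRegion

lemma monotone_badSet : Monotone badSet := fun _ _ hε z hz ↦
  ⟨hz.1, fun h ↦ hz.2 ⟨h.1, h.2.trans (by linarith)⟩⟩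

lemma measurableSet_badSet (ε : ℝ) : MeasurableSet (badSet ε) := by
  have square_measurable : MeasurableSet (Set.Icc 0 (2 * π) ×ˢ Set.Icc 0 (2 * π)) :=
    measurableSet_Icc.prod measurableSet_Icc
  exact square_measurable.diff
    (square_measurable.inter (measurableSet_le (f := fun z : ℝ × ℝ ↦ |(cos z.1 + cos z.2) / 2|)
      (by fun_prop) measurable_const))

lemma volume_badSet_lt_top (ε : ℝ) : volume (badSet ε) < ⊤ :=
  (measure_mono Set.sdiff_subset).trans_lt (isCompact_Icc.prod isCompact_Icc).measure_lt_top

lemma sin_eq_zero_of_one_le_abs_cos_add_cos_div_two {x y : ℝ}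
    (h : 1 ≤ |(cos x + cos y) / 2|) : sin x = 0 := by
  rw [sin_eq_zero_iff_cos_eq]
  rcases le_abs.1 h with h | h
  · exact .inl (by linarith [cos_le_one x, cos_le_one y])
  · exact .inr (by linarith [neg_one_le_cos x, neg_one_le_cos y])

lemma biInter_badSet_subset : ⋂ ε > 0, badSet ε ⊆ {x : ℝ | sin x = 0} ×ˢ Set.univ := by
  intro z hz
  refine ⟨sin_eq_zero_of_one_le_abs_cos_add_cos_div_two (y := z.2) ?_, Set.mem_univ _⟩
  refine le_of_forall_pos_le_add fun ε hε ↦ ?_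
  have hzε : z ∈ badSet ε := Set.mem_iInter₂.1 hz ε hε
  by_contra! hlt
  exact hzε.2 ⟨hzε.1, by linarith⟩

lemma countable_setOf_sin_eq_zero : {x : ℝ | sin x = 0}.Countable := by
  simpa only [sin_eq_zero_iff] using! Set.countable_range fun k : ℤ ↦ k * π

lemma volume_biInter_badSet : volume (⋂ ε > 0, badSet ε) = 0 := by
  refine measure_mono_null biInter_badSet_subset ?_
  rw [Measure.volume_eq_prod, Measure.prod_prod, countable_setOf_sin_eq_zero.measure_zero, zero_mul]

open scoped Topology in
lemma tendsto_volume_real_badSet :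
    Tendsto (fun ε ↦ volume.real (badSet ε)) (𝓝[>] 0) (𝓝 0) := by
  have := tendsto_measure_biInter_gt (μ := volume)
    (fun ε _ ↦ (measurableSet_badSet ε).nullMeasurableSet) (fun _ _ _ h ↦ monotone_badSet h)
    ⟨1, one_pos, (volume_badSet_lt_top 1).ne⟩
  rw [volume_biInter_badSet] at this
  exact (ENNReal.tendsto_toReal ENNReal.zero_ne_top).comp this

end BoundaryRegion

lemma inv_pow_mul_setIntegral_sq_le {α : Type*} [MeasurableSpace α] {μ : Measure α} {B : Set α}
    (hB : μ B < ⊤) {g : α → ℝ} {C r : ℝ} (hr : 0 < r) {k : ℕ} (hg : ∀ z ∈ B, |g z| ≤ C * r ^ k) :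
    (r ^ (2 * k))⁻¹ * ∫ z in B, g z ^ 2 ∂μ ≤ C ^ 2 * μ.real B := by
  have integral_le : ∫ z in B, g z ^ 2 ∂μ ≤ (C * r ^ k) ^ 2 * μ.real B := by
    refine (le_norm_self _).trans (norm_setIntegral_le_of_norm_le_const hB fun z hz ↦ ?_)
    rw [norm_pow, norm_eq_abs]
    gcongr
    exact hg z hz
  rw [inv_mul_le_iff₀ (by positivity)]
  exact integral_le.trans_eq (by ring)

lemma abs_eval_T_cos_add_cos_div_two_le_one (n : ℤ) (x y : ℝ) :
    |(Polynomial.Chebyshev.T ℝ n).eval ((cos x + cos y) / 2)| ≤ 1 := by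
  refine Polynomial.Chebyshev.abs_eval_T_real_le_one n (abs_le.2 ⟨?_, ?_⟩)
  · linarith [neg_one_le_cos x, neg_one_le_cos y]
  · linarith [cos_le_one x, cos_le_one y]

theorem boundary_region_negligible_general (a : ℕ → ℕ → ℕ → ℝ) (M : ℝ)
    (hM : ∀ (n : ℕ) (x y : ℝ),
      |∑ p ∈ range (n + 1), ∑ q ∈ range (n + 1), a n p q * cos (p * x) * cos (q * y)| ≤ M)
    (K L : ℕ) :
    ∀ δ > (0 : ℝ), ∃ ε₀ > (0 : ℝ), ∀ ε : ℝ, 0 < ε → ε < ε₀ → ∀ n : ℕ, 1 ≤ n →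
      ((n : ℝ) ^ (2 * (K + L)))⁻¹ *
        (∫ z in badSet ε,
          (∑ p ∈ range (n + 1), ∑ q ∈ range (n + 1),
            a n p q * (p : ℝ) ^ K * (q : ℝ) ^ L *
              iteratedDeriv K cos (p * z.1) * iteratedDeriv L cos (q * z.2)) ^ 2) < δ := by
  intro δ hδ
  set C : ℝ := K.factorial * L.factorial * exp 2 * M
  have tendsto_bound := tendsto_volume_real_badSet.const_mul (C ^ 2)
  rw [mul_zero] at tendsto_bound
  obtain ⟨ε₀, hε₀, bound_lt⟩ :=
    mem_nhdsGT_iff_exists_Ioo_subset.1 (tendsto_bound.eventually_lt_const hδ)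
  refine ⟨ε₀, hε₀, fun ε hε hlt n hn ↦ lt_of_le_of_lt ?_ (bound_lt ⟨hε, hlt⟩)⟩
  have hn_pos : (0 : ℝ) < n := by exact_mod_cast hn
  have freq_le : ∀ p ∈ range (n + 1), |(p : ℝ)| ≤ n := fun p hp ↦ by
    simpa using mem_range_succ_iff.1 hp
  exact inv_pow_mul_setIntegral_sq_le (volume_badSet_lt_top ε) hn_pos fun z _ ↦
    (abs_sum_sum_mul_iteratedDeriv_cos_le hn_pos hn_pos freq_le freq_le (hM n) K L z.1 z.2).trans_eq
      (by rw [pow_add, ← mul_assoc])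

/-- `lim_{ε→0⁺} sup_{n≥1} (1/n^{2(K+L)}) ∫_{B_ε}
  (Σ_{p,q} a_{n,p,q} p^K q^L ξ_K(px) ξ_L(qy))² dx dy = 0`,
where `ξ_r` is the `r`-th derivative of cosine (stated in `ε`-`δ` form). -/
theorem boundary_region_negligible
    (a : ℕ → ℕ → ℕ → ℝ)
    (ha : ∀ (n : ℕ) (x y : ℝ),
      (Polynomial.Chebyshev.T ℝ n).eval ((Real.cos x + Real.cos y) / 2) =
        ∑ p ∈ Finset.range (n + 1), ∑ q ∈ Finset.range (n + 1),
          a n p q * Real.cos (p * x) * Real.cos (q * y))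
    (K L : ℕ) :
    ∀ δ > (0 : ℝ), ∃ ε₀ > (0 : ℝ), ∀ ε : ℝ, 0 < ε → ε < ε₀ →
      ∀ n : ℕ, 1 ≤ n →
        ((n : ℝ) ^ (2 * (K + L)))⁻¹ *
            (∫ z in badSet ε,
              (∑ p ∈ Finset.range (n + 1), ∑ q ∈ Finset.range (n + 1),
                a n p q * (p : ℝ) ^ K * (q : ℝ) ^ L *
                  iteratedDeriv K Real.cos (p * z.1) *
                  iteratedDeriv L Real.cos (q * z.2)) ^ 2) < δ := by
  exact boundary_region_negligible_general a 1
    (fun n x y ↦ ha n x y ▸ abs_eval_T_cos_add_cos_div_two_le_one n x y) K L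
end

section
/- For all K, L ∈ ℕ and every fixed ε ∈ (0,1), lim_{n→∞} [ (1/(π² n^{2(K+L)})) ∫_{A_ε} (∂_x^K ∂_y^L h_n(x,y))² dx dy − I_{K,L}(ε,n) ] = 0, where I_{K,L}(ε,n) = (1/(π² n^{2(K+L)})) ∫_{A_ε} ( T_n^{(K+L)}((cos x + cos y)/2) · (−sin x / 2)^K · (−sin y / 2)^L )² dx dy. -/
open Real MeasureTheory Filter Polynomial

/-- `I_{K,L}(ε,n) = (1/(π² n^{2(K+L)})) ∫_{A_ε}
  (T_n^{(K+L)}((cos x + cos y)/2) (−sin x/2)^K (−sin y/2)^L)² dx dy`. -/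
noncomputable def mainTermIntegral (K L : ℕ) (ε : ℝ) (n : ℕ) : ℝ :=
  (π ^ 2 * (n : ℝ) ^ (2 * (K + L)))⁻¹ *
    ∫ z in goodSet ε,
      ((Polynomial.derivative^[K + L] (Polynomial.Chebyshev.T ℝ n)).eval
          ((Real.cos z.1 + Real.cos z.2) / 2) *
        (-Real.sin z.1 / 2) ^ K * (-Real.sin z.2 / 2) ^ L) ^ 2

/-!
By Faà di Bruno's formula, `∂_x^K ∂_y^L h_n` is a sum of terms `b(x) c(y) T_n^{(k)}(u)` with
`u = (cos x + cos y) / 2`, with `b` and `c` continuous and independent of `n`, and with `k ≤ K + L`.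
Only the partitions into singletons give `k = K + L`, and they produce the integrand of
`I_{K,L}(ε,n)`. Away from `u = ±1` the Chebyshev differential equation, differentiated `k` times,
shows inductively that `T_n^{(k)}(u) = O(n ^ k)`. So on the compact set `A_ε` the other terms are
uniformly `o(n ^ (K + L))`, and the squares of the two integrands differ by `o(n ^ (2 * (K + L)))`.
-/

open Asymptotics OrderedFinpartition Polynomial.Chebyshev
open scoped Nat

section FaaDiBruno

theorem orderedFinpartition_eq_of_length_eq {m : ℕ} {b c : OrderedFinpartition m}
    (hb : b.length = m) (hc : c.length = m) : b = c := by
  induction m with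
  | zero => exact Subsingleton.elim b c
  | succ m ih =>
    have exists_extendLeft : ∀ {c : OrderedFinpartition (m + 1)}, c.length = m + 1 →
        ∃ c' : OrderedFinpartition m, c'.length = m ∧ c = c'.extendLeft := by
      intro c hc
      obtain ⟨⟨c', _ | i⟩, rfl⟩ := (extendEquiv m).surjective c
      · exact ⟨c', by simpa using hc, rfl⟩
      · exact absurd hc (Nat.lt_succ_of_le c'.length_le).ne
    obtain ⟨b', hb', rfl⟩ := exists_extendLeft hb
    obtain ⟨c', hc', rfl⟩ := exists_extendLeft hc
    rw [ih hb' hc']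

theorem orderedFinpartition_length_lt_of_ne_atomic {m : ℕ} {c : OrderedFinpartition m}
    (hc : c ≠ atomic m) : c.length < m :=
  c.length_le.lt_of_ne fun h => hc (orderedFinpartition_eq_of_length_eq h rfl)

variable {𝕜 : Type*} [NontriviallyNormedField 𝕜] {m : ℕ}

/-- The product `∏ j, f^(|I_j|)(x)` over the blocks `I_j` of the partition `c` of `{1, …, m}`, i.e.
the factor of `F^(c.length)(f x)` in Faà di Bruno's formula for `(F ∘ f)^(m)(x)`. -/
noncomputable def faaDiBrunoCoeff (f : 𝕜 → 𝕜) (c : OrderedFinpartition m) (x : 𝕜) : 𝕜 :=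
  ∏ j, iteratedDeriv (c.partSize j) f x

theorem faaDiBrunoCoeff_atomic (f : 𝕜 → 𝕜) (x : 𝕜) :
    faaDiBrunoCoeff f (atomic m) x = deriv f x ^ m := by
  simp [faaDiBrunoCoeff]

theorem continuous_faaDiBrunoCoeff {f : 𝕜 → 𝕜} (hf : ContDiff 𝕜 m f) (c : OrderedFinpartition m) :
    Continuous (faaDiBrunoCoeff f c) :=
  continuous_finsetProd _ fun j _ => hf.continuous_iteratedDeriv _ (mod_cast c.partSize_le j)

theorem continuous_deriv_pow {f : 𝕜 → 𝕜} (hf : ContDiff 𝕜 m f) :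
    Continuous fun x => deriv f x ^ m :=
  (continuous_faaDiBrunoCoeff hf (atomic m)).congr (faaDiBrunoCoeff_atomic f)

theorem iteratedDeriv_comp_const_add_eq_sum {F f : 𝕜 → 𝕜} (hF : ContDiff 𝕜 m F)
    (hf : ContDiff 𝕜 m f) (a x : 𝕜) :
    iteratedDeriv m (fun t => F (a + f t)) x =
      ∑ c : OrderedFinpartition m, faaDiBrunoCoeff f c x * iteratedDeriv c.length F (a + f x) := by
  rw [← Function.comp_def F, iteratedDeriv_comp_eq_sum_orderedFinpartition hF.contDiffAt
    (contDiff_const.add hf).contDiffAt le_rfl]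
  refine Finset.sum_congr rfl fun c _ => ?_
  simp only [faaDiBrunoCoeff, iteratedDeriv_const_add (c.partSize_pos _), mul_comm]

theorem contDiff_polynomial_eval (p : 𝕜[X]) {k : WithTop ℕ∞} : ContDiff 𝕜 k fun t => p.eval t := by
  simpa using p.contDiff_aeval (𝕜 := 𝕜) k

theorem iteratedDeriv_polynomial_eval (p : 𝕜[X]) (k : ℕ) :
    iteratedDeriv k (fun t => p.eval t) = fun t => (derivative^[k] p).eval t := by
  induction k with
  | zero => simp
  | succ k ih =>
    ext t
    rw [iteratedDeriv_succ, ih, Polynomial.deriv, Function.iterate_succ_apply']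

end FaaDiBruno

section MixedPartial

variable {K L : ℕ} {F f g : ℝ → ℝ}

theorem mixedPartial_comp_add (hF : ContDiff ℝ (K + L : ℕ) F) (hf : ContDiff ℝ K f)
    (hg : ContDiff ℝ L g) (x y : ℝ) :
    mixedPartial K L (fun x y => F (f x + g y)) x y =
      ∑ c : OrderedFinpartition K × OrderedFinpartition L,
        faaDiBrunoCoeff f c.1 x * faaDiBrunoCoeff g c.2 y *
          iteratedDeriv (c.1.length + c.2.length) F (f x + g y) := by
  have contDiff_iteratedDeriv (c : OrderedFinpartition L) :
      ContDiff ℝ K (iteratedDeriv c.length F) := by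
    rw [iteratedDeriv_eq_iterate]
    exact ContDiff.iterate_deriv' _ _ (hF.of_le (mod_cast Nat.add_le_add_left c.length_le K))
  calc mixedPartial K L (fun x y => F (f x + g y)) x y
      = iteratedDeriv K (fun x' => ∑ c : OrderedFinpartition L,
          faaDiBrunoCoeff g c y * iteratedDeriv c.length F (g y + f x')) x := by
        unfold mixedPartial
        congr 1
        ext x'
        rw [iteratedDeriv_comp_const_add_eq_sum (hF.of_le (mod_cast Nat.le_add_left L K)) hg]
        simp only [add_comm (f x')]
    _ = ∑ c : OrderedFinpartition L, faaDiBrunoCoeff g c y *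
          iteratedDeriv K (fun x' => iteratedDeriv c.length F (g y + f x')) x := by
        have contDiff_term (c : OrderedFinpartition L) : ContDiff ℝ K fun x' =>
            faaDiBrunoCoeff g c y * iteratedDeriv c.length F (g y + f x') :=
          contDiff_const.mul ((contDiff_iteratedDeriv c).comp (contDiff_const.add hf))
        simp only [iteratedDeriv_fun_sum fun c _ => (contDiff_term c).contDiffAt,
          iteratedDeriv_const_mul_field]
    _ = _ := by
        simp only [iteratedDeriv_comp_const_add_eq_sum (contDiff_iteratedDeriv _) hf,
          Finset.mul_sum]
        rw [Fintype.sum_prod_type_right]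
        refine Finset.sum_congr rfl fun c _ => Finset.sum_congr rfl fun b _ => ?_
        simp only [iteratedDeriv_eq_iterate, Function.iterate_add_apply, add_comm (g y)]
        ring

/-- The term of the Faà di Bruno expansion of `∂_x^K ∂_y^L (F (f x + g y))` in which `F` is
differentiated `K + L` times; in all the other terms `F` is differentiated fewer times. -/
noncomputable def mixedPartialLeading (K L : ℕ) (F f g : ℝ → ℝ) (x y : ℝ) : ℝ :=
  iteratedDeriv (K + L) F (f x + g y) * deriv f x ^ K * deriv g y ^ L

theorem mixedPartial_comp_add_sub_leading (hF : ContDiff ℝ (K + L : ℕ) F) (hf : ContDiff ℝ K f)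
    (hg : ContDiff ℝ L g) (x y : ℝ) :
    mixedPartial K L (fun x y => F (f x + g y)) x y - mixedPartialLeading K L F f g x y =
      ∑ c ∈ Finset.univ.erase (atomic K, atomic L),
        faaDiBrunoCoeff f c.1 x * faaDiBrunoCoeff g c.2 y *
          iteratedDeriv (c.1.length + c.2.length) F (f x + g y) := by
  rw [mixedPartial_comp_add hF hf hg, mixedPartialLeading,
    ← Finset.sum_erase_add _ _ (Finset.mem_univ (atomic K, atomic L)), faaDiBrunoCoeff_atomic,
    faaDiBrunoCoeff_atomic]
  simp only [atomic_length]
  ring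

theorem length_add_length_lt_of_ne_atomic {c : OrderedFinpartition K × OrderedFinpartition L}
    (hc : c ≠ (atomic K, atomic L)) : c.1.length + c.2.length < K + L := by
  by_cases hc₁ : c.1 = atomic K
  · have hc₂ : c.2 ≠ atomic L := fun h => hc (Prod.ext hc₁ h)
    exact add_lt_add_of_le_of_lt c.1.length_le (orderedFinpartition_length_lt_of_ne_atomic hc₂)
  · exact add_lt_add_of_lt_of_le (orderedFinpartition_length_lt_of_ne_atomic hc₁) c.2.length_le

theorem continuous_mixedPartial_comp_add (hF : ContDiff ℝ (K + L : ℕ) F) (hf : ContDiff ℝ K f)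
    (hg : ContDiff ℝ L g) :
    Continuous fun z : ℝ × ℝ => mixedPartial K L (fun x y => F (f x + g y)) z.1 z.2 := by
  simp only [mixedPartial_comp_add hF hf hg]
  refine continuous_finsetSum _ fun c _ => ?_
  have hc₁ := continuous_faaDiBrunoCoeff hf c.1
  have hc₂ := continuous_faaDiBrunoCoeff hg c.2
  have hFc := hF.continuous_iteratedDeriv (c.1.length + c.2.length)
    (mod_cast add_le_add c.1.length_le c.2.length_le)
  have hfc := hf.continuous
  have hgc := hg.continuous
  fun_prop

theorem continuous_mixedPartialLeading (hF : ContDiff ℝ (K + L : ℕ) F) (hf : ContDiff ℝ K f)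
    (hg : ContDiff ℝ L g) : Continuous fun z : ℝ × ℝ => mixedPartialLeading K L F f g z.1 z.2 := by
  have inner_continuous : Continuous fun z : ℝ × ℝ => f z.1 + g z.2 :=
    (hf.continuous.comp continuous_fst).add (hg.continuous.comp continuous_snd)
  exact (((hF.continuous_iteratedDeriv (K + L) le_rfl).comp inner_continuous).mul
    ((continuous_deriv_pow hf).comp continuous_fst)).mul
      ((continuous_deriv_pow hg).comp continuous_snd)

end MixedPartial

section Asymptotics

variable {ι : Type*} {l : Filter ι}

theorem isLittleO_setIntegral {α E F : Type*} [MeasurableSpace α] {μ : Measure α}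
    [NormedAddCommGroup E] [NormedSpace ℝ E] [NormedAddCommGroup F] {f : α × ι → E} {g : ι → F}
    {s : Set α} (hf : f =o[𝓟 s ×ˢ l] (g ∘ Prod.snd)) (hs : μ s < ⊤) :
    (fun i => ∫ x in s, f (x, i) ∂μ) =o[l] g := by
  refine isLittleO_iff.2 fun ε hε => ?_
  have hδ : 0 < ε / (μ.real s + 1) := by positivity
  have bound := eventually_prod_principal_iff.1 (eventually_swap_iff.1 (hf.def hδ))
  filter_upwards [bound] with i hi
  calc ‖∫ x in s, f (x, i) ∂μ‖
      ≤ ε / (μ.real s + 1) * ‖g i‖ * μ.real s :=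
        norm_setIntegral_le_of_norm_le_const hs hi
    _ ≤ ε / (μ.real s + 1) * ‖g i‖ * (μ.real s + 1) := by gcongr; linarith
    _ = ε * ‖g i‖ := by field_simp

variable {K L : ℕ} {F : ι → ℝ → ℝ} {f g : ℝ → ℝ} {a : ι → ℝ} {s : Set (ℝ × ℝ)}

theorem isBigO_faaDiBrunoCoeff_mul (hs : IsCompact s) (hf : ContDiff ℝ K f) (hg : ContDiff ℝ L g)
    (c : OrderedFinpartition K × OrderedFinpartition L) {G : (ℝ × ℝ) × ι → ℝ} {b : ι → ℝ}
    (hG : G =O[𝓟 s ×ˢ l] (b ∘ Prod.snd)) :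
    (fun w => faaDiBrunoCoeff f c.1 w.1.1 * faaDiBrunoCoeff g c.2 w.1.2 * G w)
      =O[𝓟 s ×ˢ l] (b ∘ Prod.snd) := by
  have coeff_continuous : Continuous fun z : ℝ × ℝ =>
      faaDiBrunoCoeff f c.1 z.1 * faaDiBrunoCoeff g c.2 z.2 :=
    ((continuous_faaDiBrunoCoeff hf c.1).comp continuous_fst).mul
      ((continuous_faaDiBrunoCoeff hg c.2).comp continuous_snd)
  have coeff_bounded := (coeff_continuous.continuousOn.isBigO_principal hs
    (norm_ne_zero_iff.2 (one_ne_zero (α := ℝ)))).comp_fst l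
  simpa only [Function.comp_def, one_mul] using coeff_bounded.mul hG

theorem mixedPartial_comp_add_sub_leading_isLittleO (ha : Tendsto a l atTop) (hs : IsCompact s)
    (hF : ∀ i, ContDiff ℝ (K + L : ℕ) (F i)) (hf : ContDiff ℝ K f) (hg : ContDiff ℝ L g)
    (hFa : ∀ k < K + L, (fun w : (ℝ × ℝ) × ι => iteratedDeriv k (F w.2) (f w.1.1 + g w.1.2))
      =O[𝓟 s ×ˢ l] ((a · ^ k) ∘ Prod.snd)) :
    (fun w : (ℝ × ℝ) × ι => mixedPartial K L (fun x y => F w.2 (f x + g y)) w.1.1 w.1.2 -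
        mixedPartialLeading K L (F w.2) f g w.1.1 w.1.2)
      =o[𝓟 s ×ˢ l] ((a · ^ (K + L)) ∘ Prod.snd) := by
  simp only [mixedPartial_comp_add_sub_leading (hF _) hf hg]
  refine IsLittleO.fun_sum fun c hc => ?_
  have order_lt := length_add_length_lt_of_ne_atomic (Finset.ne_of_mem_erase hc)
  have pow_isLittleO : (a · ^ (c.1.length + c.2.length)) =o[l] (a · ^ (K + L)) :=
    (isLittleO_pow_pow_atTop_of_lt order_lt).comp_tendsto ha
  exact (isBigO_faaDiBrunoCoeff_mul hs hf hg c (hFa _ order_lt)).trans_isLittleO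
    (pow_isLittleO.comp_snd _)

theorem mixedPartialLeading_isBigO (hs : IsCompact s) (hf : ContDiff ℝ K f) (hg : ContDiff ℝ L g)
    (hFa : (fun w : (ℝ × ℝ) × ι => iteratedDeriv (K + L) (F w.2) (f w.1.1 + g w.1.2))
      =O[𝓟 s ×ˢ l] ((a · ^ (K + L)) ∘ Prod.snd)) :
    (fun w : (ℝ × ℝ) × ι => mixedPartialLeading K L (F w.2) f g w.1.1 w.1.2)
      =O[𝓟 s ×ˢ l] ((a · ^ (K + L)) ∘ Prod.snd) := by
  refine (isBigO_faaDiBrunoCoeff_mul hs hf hg (atomic K, atomic L) hFa).congr_left fun w => ?_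
  rw [faaDiBrunoCoeff_atomic, faaDiBrunoCoeff_atomic, mixedPartialLeading]
  ring

theorem isLittleO_sq_sub_sq {α : Type*} {l : Filter α} {p q r : α → ℝ}
    (hpq : (fun w => p w - q w) =o[l] r) (hq : q =O[l] r) :
    (fun w => p w ^ 2 - q w ^ 2) =o[l] fun w => r w ^ 2 := by
  have add_isBigO : (fun w => p w + q w) =O[l] r :=
    (hpq.isBigO.add (hq.const_mul_left 2)).congr_left fun w => by ring
  exact (add_isBigO.mul_isLittleO hpq).congr (fun w => by ring) fun w => by ring

theorem integral_sq_mixedPartial_comp_add_sub_isLittleO (ha : Tendsto a l atTop) (hs : IsCompact s)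
    (hF : ∀ i, ContDiff ℝ (K + L : ℕ) (F i)) (hf : ContDiff ℝ K f) (hg : ContDiff ℝ L g)
    (hFa : ∀ k ≤ K + L, (fun w : (ℝ × ℝ) × ι => iteratedDeriv k (F w.2) (f w.1.1 + g w.1.2))
      =O[𝓟 s ×ˢ l] ((a · ^ k) ∘ Prod.snd)) :
    (fun i => (∫ z in s, mixedPartial K L (fun x y => F i (f x + g y)) z.1 z.2 ^ 2) -
        ∫ z in s, mixedPartialLeading K L (F i) f g z.1 z.2 ^ 2)
      =o[l] fun i => (a i ^ (K + L)) ^ 2 := by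
  have integrable_partial (i : ι) :=
    ((continuous_mixedPartial_comp_add (hF i) hf hg).pow 2).continuousOn.integrableOn_compact
      (μ := volume) hs
  have integrable_leading (i : ι) :=
    ((continuous_mixedPartialLeading (hF i) hf hg).pow 2).continuousOn.integrableOn_compact
      (μ := volume) hs
  have integrand_isLittleO := isLittleO_sq_sub_sq
    (mixedPartial_comp_add_sub_leading_isLittleO ha hs hF hf hg fun k hk => hFa k hk.le)
    (mixedPartialLeading_isBigO hs hf hg (hFa _ le_rfl))
  exact (isLittleO_setIntegral integrand_isLittleO hs.measure_lt_top).congr_left fun i =>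
    integral_sub (integrable_partial i) (integrable_leading i)

end Asymptotics

section Chebyshev

variable {u : ℝ} (n : ℤ)

theorem sqrt_one_sub_sq_mul_abs_eval_derivative_T_le (hu : |u| ≤ 1) :
    √(1 - u ^ 2) * |(derivative (T ℝ n)).eval u| ≤ |(n : ℝ)| := by
  obtain ⟨hu₁, hu₂⟩ := abs_le.1 hu
  have sin_eq : (U ℝ (n - 1)).eval u * √(1 - u ^ 2) = sin (n * arccos u) := by
    simpa [cos_arccos hu₁ hu₂, sin_arccos] using U_real_cos (arccos u) (n - 1)
  calc √(1 - u ^ 2) * |(derivative (T ℝ n)).eval u|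
      = |(n : ℝ)| * |(U ℝ (n - 1)).eval u * √(1 - u ^ 2)| := by
        rw [T_derivative_eq_U, eval_mul, eval_intCast, abs_mul, abs_mul,
          abs_of_nonneg (sqrt_nonneg _)]
        ring
    _ ≤ |(n : ℝ)| * 1 := by
        rw [sin_eq]
        gcongr
        exact abs_sin_le_one _
    _ = |(n : ℝ)| := mul_one _

theorem one_sub_sq_mul_abs_eval_derivative_T_le (hu : |u| ≤ 1) :
    (1 - u ^ 2) * |(derivative (T ℝ n)).eval u| ≤ |(n : ℝ)| := by
  have le_sqrt : 1 - u ^ 2 ≤ √(1 - u ^ 2) :=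
    le_sqrt_of_sq_le (by nlinarith [sq_nonneg u, (sq_le_one_iff_abs_le_one u).2 hu])
  calc (1 - u ^ 2) * |(derivative (T ℝ n)).eval u|
      ≤ √(1 - u ^ 2) * |(derivative (T ℝ n)).eval u| := by gcongr
    _ ≤ |(n : ℝ)| := sqrt_one_sub_sq_mul_abs_eval_derivative_T_le n hu

variable {n}

theorem one_sub_sq_mul_abs_eval_iterate_derivative_T_le (hn : n ≠ 0) (hu : |u| ≤ 1) (k : ℕ) :
    (1 - u ^ 2) * |(derivative^[k + 2] (T ℝ n)).eval u| ≤
      (2 * k + 1) * |(derivative^[k + 1] (T ℝ n)).eval u| +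
        (k ^ 2 + 1) * |(n : ℝ)| ^ 2 * |(derivative^[k] (T ℝ n)).eval u| := by
  have hn₁ : 1 ≤ |(n : ℝ)| ^ 2 := one_le_pow₀ (mod_cast Int.one_le_abs hn)
  have coeff_le : |(n : ℝ) ^ 2 - k ^ 2| ≤ (k ^ 2 + 1) * |(n : ℝ)| ^ 2 := by
    rw [sq_abs] at hn₁ ⊢
    refine abs_le.2 ⟨?_, ?_⟩ <;> nlinarith [sq_nonneg (k : ℝ)]
  have one_sub_sq_nonneg : 0 ≤ 1 - u ^ 2 := sub_nonneg.2 ((sq_le_one_iff_abs_le_one u).2 hu)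
  calc (1 - u ^ 2) * |(derivative^[k + 2] (T ℝ n)).eval u|
      = |(2 * k + 1) * u * (derivative^[k + 1] (T ℝ n)).eval u -
          (n ^ 2 - k ^ 2) * (derivative^[k] (T ℝ n)).eval u| := by
        rw [← one_sub_X_sq_mul_iterate_derivative_T_eval, abs_mul, abs_of_nonneg one_sub_sq_nonneg]
    _ ≤ (2 * k + 1) * |u| * |(derivative^[k + 1] (T ℝ n)).eval u| +
          |(n : ℝ) ^ 2 - k ^ 2| * |(derivative^[k] (T ℝ n)).eval u| := by
        refine (abs_sub _ _).trans_eq ?_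
        rw [abs_mul, abs_mul, abs_mul, abs_of_nonneg (by positivity : (0 : ℝ) ≤ 2 * k + 1)]
    _ ≤ (2 * k + 1) * 1 * |(derivative^[k + 1] (T ℝ n)).eval u| +
          ((k ^ 2 + 1) * |(n : ℝ)| ^ 2) * |(derivative^[k] (T ℝ n)).eval u| := by gcongr
    _ = _ := by rw [mul_one]

variable (n)

theorem one_sub_sq_pow_mul_abs_eval_iterate_derivative_T_le (hu : |u| ≤ 1) (k : ℕ) :
    (1 - u ^ 2) ^ k * |(derivative^[k] (T ℝ n)).eval u| ≤ k ! * (3 * |(n : ℝ)|) ^ k := by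
  rcases eq_or_ne n 0 with rfl | hn
  · rcases k.eq_zero_or_pos with rfl | hk
    · simp
    · simp [iterate_derivative_one hk, hk.ne']
  have hn₁ : 1 ≤ |(n : ℝ)| := mod_cast Int.one_le_abs hn
  have hv₀ : 0 ≤ 1 - u ^ 2 := sub_nonneg.2 ((sq_le_one_iff_abs_le_one u).2 hu)
  have hv₁ : 1 - u ^ 2 ≤ 1 := sub_le_self _ (sq_nonneg u)
  induction k using Nat.twoStepInduction with
  | zero => simpa using abs_eval_T_real_le_one n hu
  | one =>
    calc (1 - u ^ 2) ^ 1 * |(derivative^[1] (T ℝ n)).eval u|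
        ≤ |(n : ℝ)| := by simpa using one_sub_sq_mul_abs_eval_derivative_T_le n hu
      _ ≤ 1 ! * (3 * |(n : ℝ)|) ^ 1 := by
          rw [Nat.factorial_one, Nat.cast_one, one_mul, pow_one]
          linarith
  | more k ih ih' =>
    set v := 1 - u ^ 2
    set N := |(n : ℝ)|
    set D := fun j => |(derivative^[j] (T ℝ n)).eval u|
    calc v ^ (k + 2) * D (k + 2)
        = v ^ (k + 1) * (v * D (k + 2)) := by ring
      _ ≤ v ^ (k + 1) * ((2 * k + 1) * D (k + 1) + (k ^ 2 + 1) * N ^ 2 * D k) := by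
          gcongr
          exact one_sub_sq_mul_abs_eval_iterate_derivative_T_le hn hu k
      _ = (2 * k + 1) * (v ^ (k + 1) * D (k + 1)) +
            (k ^ 2 + 1) * N ^ 2 * (v * (v ^ k * D k)) := by ring
      _ ≤ (2 * k + 1) * ((k + 1)! * (3 * N) ^ (k + 1) * N) +
            (k ^ 2 + 1) * N ^ 2 * (1 * (k ! * (3 * N) ^ k)) := by
          gcongr (2 * k + 1) * ?_ + (k ^ 2 + 1) * N ^ 2 * (?_ * ?_)
          exact ih'.trans (le_mul_of_one_le_right (by positivity) hn₁)
      _ = (3 * (2 * k + 1) * (k + 1) + (k ^ 2 + 1)) * (k ! * 3 ^ k * N ^ (k + 2)) := by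
          push_cast [Nat.factorial_succ]
          ring
      _ ≤ (9 * (k + 2) * (k + 1)) * (k ! * 3 ^ k * N ^ (k + 2)) := by
          gcongr
          nlinarith [k.cast_nonneg (α := ℝ)]
      _ = (k + 2)! * (3 * N) ^ (k + 2) := by
          push_cast [Nat.factorial_succ]
          ring

end Chebyshev

section GoodSet

variable {ε : ℝ}

theorem isCompact_goodSet : IsCompact (goodSet ε) :=
  (isCompact_Icc.prod isCompact_Icc).inter_right
    (isClosed_le (f := fun z : ℝ × ℝ => |(cos z.1 + cos z.2) / 2|) (by fun_prop) continuous_const)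

theorem iterate_derivative_T_isBigO_on_goodSet (hε : 0 < ε) (k : ℕ) :
    (fun w : (ℝ × ℝ) × ℕ => (derivative^[k] (T ℝ w.2)).eval ((cos w.1.1 + cos w.1.2) / 2))
      =O[𝓟 (goodSet ε) ×ˢ atTop] ((fun n : ℕ => (n : ℝ) ^ k) ∘ Prod.snd) := by
  refine IsBigO.of_bound (k ! * 3 ^ k / ε ^ k) ?_
  filter_upwards [prod_mem_prod (mem_principal_self _) univ_mem] with w ⟨⟨_, hu⟩, _⟩
  set u := (cos w.1.1 + cos w.1.2) / 2
  have le_one_sub_sq : ε ≤ 1 - u ^ 2 := by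
    rw [← sq_abs]
    nlinarith [abs_nonneg u]
  rw [div_mul_eq_mul_div, le_div_iff₀' (by positivity)]
  calc ε ^ k * ‖(derivative^[k] (T ℝ w.2)).eval u‖
      ≤ (1 - u ^ 2) ^ k * |(derivative^[k] (T ℝ w.2)).eval u| := by
        rw [norm_eq_abs]
        gcongr
    _ ≤ k ! * (3 * |((w.2 : ℤ) : ℝ)|) ^ k :=
        one_sub_sq_pow_mul_abs_eval_iterate_derivative_T_le w.2 (by linarith) k
    _ = k ! * 3 ^ k * ‖((fun n : ℕ => (n : ℝ) ^ k) ∘ Prod.snd) w‖ := by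
        simp [mul_pow, mul_assoc]

end GoodSet

theorem hFun_eq_comp_add (n : ℕ) :
    hFun n = fun x y => (T ℝ n).eval (cos x / 2 + cos y / 2) := by
  simp only [← add_div]
  rfl

theorem mainTermIntegral_eq_integral_leading (K L : ℕ) (ε : ℝ) (n : ℕ) :
    mainTermIntegral K L ε n = (π ^ 2 * (n : ℝ) ^ (2 * (K + L)))⁻¹ *
      ∫ z in goodSet ε, mixedPartialLeading K L (fun u => (T ℝ n).eval u)
        (fun x => cos x / 2) (fun y => cos y / 2) z.1 z.2 ^ 2 := by
  simp only [mainTermIntegral, mixedPartialLeading, iteratedDeriv_polynomial_eval, ← add_div,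
    deriv_div_const, Real.deriv_cos]

/-- for fixed `ε ∈ (0,1)`,
`lim_{n→∞} [(1/(π² n^{2(K+L)})) ∫_{A_ε} (∂_x^K ∂_y^L h_n)² − I_{K,L}(ε,n)] = 0`. -/
theorem first_simplification
    (K L : ℕ) (ε : ℝ) (hε : ε ∈ Set.Ioo (0 : ℝ) 1) :
    Filter.Tendsto (fun n : ℕ =>
        (π ^ 2 * (n : ℝ) ^ (2 * (K + L)))⁻¹ *
            (∫ z in goodSet ε, (mixedPartial K L (hFun n) z.1 z.2) ^ 2) -
          mainTermIntegral K L ε n)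
      Filter.atTop (nhds 0) := by
  have contDiff_half_cos {m : ℕ} : ContDiff ℝ m fun x => cos x / 2 := contDiff_cos.div_const 2
  have diff_isLittleO := integral_sq_mixedPartial_comp_add_sub_isLittleO (K := K) (L := L)
    (F := fun (n : ℕ) u => (T ℝ n).eval u) (a := fun n => (n : ℝ)) (s := goodSet ε)
    tendsto_natCast_atTop_atTop isCompact_goodSet (fun n => contDiff_polynomial_eval (T ℝ n))
    contDiff_half_cos contDiff_half_cos fun k _ => by
      simpa only [iteratedDeriv_polynomial_eval, ← add_div]
        using iterate_derivative_T_isBigO_on_goodSet hε.1 k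
  have quotient_tendsto := diff_isLittleO.tendsto_div_nhds_zero.const_mul (π ^ 2)⁻¹
  rw [mul_zero] at quotient_tendsto
  refine quotient_tendsto.congr fun n => ?_
  rw [mainTermIntegral_eq_integral_leading, hFun_eq_comp_add, ← mul_sub, mul_inv, ← pow_mul',
    div_eq_inv_mul, mul_assoc]
end

section
/- For every fixed θ ∈ (0,π) and every r ∈ ℕ, lim_{n→∞} ( ξ_r(n θ) − n^{−r} · T_n^{(r)}(cos θ) · (−sin θ)^r ) = 0, where ξ_r is the r-th derivative of cosine and T_n^{(r)} is the r-th derivative of the Chebyshev polynomial T_n. (Equivalently, n^{−r} d^r/dθ^r [T_n(cos θ)] − T_n^{(r)}(cos θ)(−sin θ)^r → 0.) -/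
open Real Filter Polynomial

/-!
Write `S r n = n⁻ʳ T_n⁽ʳ⁾(cos θ) (-sin θ)ʳ`. Differentiating the Chebyshev differential equation
`k` times shows that `S (k + 2) n + S k n` is `n⁻¹` times a linear combination of `S k n` and
`S (k + 1) n` with coefficients bounded in `n`, whereas the derivatives of cosine satisfy the
unperturbed recurrence `ξ (k + 2) = -ξ k`. As `S` and `ξ (n θ)` have the same initial values
`cos (n θ)` and `-sin (n θ)`, two-step induction bounds their difference by `O(n⁻¹)`.
-/

/-- The normalized leading term `n⁻ʳ T_n⁽ʳ⁾(cos θ) (-sin θ)ʳ` of the `r`-th derivative of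
`θ ↦ T_n (cos θ)`, to be compared with the `r`-th derivative of cosine at `n θ`. For `n = 0` and
`0 < r` it is `0`. -/
noncomputable def chebyshevLeadingTerm (θ : ℝ) (r n : ℕ) : ℝ :=
  ((n : ℝ) ^ r)⁻¹ * (derivative^[r] (Chebyshev.T ℝ n)).eval (cos θ) * (-sin θ) ^ r

theorem chebyshevLeadingTerm_zero (θ : ℝ) (n : ℕ) :
    chebyshevLeadingTerm θ 0 n = cos (n * θ) := by
  simp [chebyshevLeadingTerm]

theorem chebyshevLeadingTerm_one (θ : ℝ) (n : ℕ) :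
    chebyshevLeadingTerm θ 1 n = -sin (n * θ) := by
  rcases eq_or_ne n 0 with rfl | hn
  · simp [chebyshevLeadingTerm]
  · have hU : (Chebyshev.U ℝ (n - 1)).eval (cos θ) * sin θ = sin (n * θ) := by simp
    simp [chebyshevLeadingTerm, Chebyshev.T_derivative_eq_U, hU, hn]

theorem chebyshevLeadingTerm_add_two {θ : ℝ} (hθ : sin θ ≠ 0) (k : ℕ) {n : ℕ} (hn : n ≠ 0) :
    chebyshevLeadingTerm θ (k + 2) n =
      -chebyshevLeadingTerm θ k n +
        (n : ℝ)⁻¹ * (k ^ 2 * ((n : ℝ)⁻¹ * chebyshevLeadingTerm θ k n) -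
          (2 * k + 1) * cot θ * chebyshevLeadingTerm θ (k + 1) n) := by
  have hode := Chebyshev.one_sub_X_sq_mul_iterate_derivative_T_eval (n : ℤ) k (cos θ)
  rw [← sin_sq] at hode
  push_cast at hode
  have hfactor : chebyshevLeadingTerm θ (k + 2) n = ((n : ℝ) ^ (k + 2))⁻¹ * (-sin θ) ^ k *
      (sin θ ^ 2 * (derivative^[k + 2] (Chebyshev.T ℝ n)).eval (cos θ)) := by
    rw [chebyshevLeadingTerm]
    ring
  rw [hfactor, hode, chebyshevLeadingTerm, chebyshevLeadingTerm, cot_eq_cos_div_sin]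
  have hn' : (n : ℝ) ≠ 0 := Nat.cast_ne_zero.mpr hn
  field_simp
  ring

theorem isBigO_one_iteratedDeriv_cos {α : Type*} (l : Filter α) (u : α → ℝ) (r : ℕ) :
    (fun a => iteratedDeriv r cos (u a)) =O[l] (fun _ => (1 : ℝ)) :=
  .of_bound 1 (.of_forall fun a => by simpa using abs_iteratedDeriv_cos_le_one r (u a))

theorem isBigO_one_inv_natCast : (fun n : ℕ => (n : ℝ)⁻¹) =O[atTop] (fun _ => (1 : ℝ)) :=
  tendsto_inv_atTop_nhds_zero_nat.isBigO_one ℝ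

theorem isBigO_one_chebyshevLeadingTerm_of_isBigO_inv {θ : ℝ} {r : ℕ}
    (h : (fun n : ℕ => iteratedDeriv r cos (n * θ) - chebyshevLeadingTerm θ r n)
      =O[atTop] (fun n : ℕ => (n : ℝ)⁻¹)) :
    (fun n : ℕ => chebyshevLeadingTerm θ r n) =O[atTop] (fun _ => (1 : ℝ)) := by
  simpa using
    (isBigO_one_iteratedDeriv_cos atTop (fun n : ℕ => n * θ) r).sub (h.trans isBigO_one_inv_natCast)

theorem isBigO_inv_iteratedDeriv_cos_sub_chebyshevLeadingTerm {θ : ℝ} (hθ : sin θ ≠ 0) (r : ℕ) :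
    (fun n : ℕ => iteratedDeriv r cos (n * θ) - chebyshevLeadingTerm θ r n)
      =O[atTop] (fun n : ℕ => (n : ℝ)⁻¹) := by
  induction r using Nat.twoStepInduction with
  | zero => simpa [chebyshevLeadingTerm_zero] using Asymptotics.isBigO_zero _ _
  | one => simpa [chebyshevLeadingTerm_one] using Asymptotics.isBigO_zero _ _
  | more k ih_k ih_succ =>
    have hbdd_k := isBigO_one_chebyshevLeadingTerm_of_isBigO_inv ih_k
    have hbdd_succ := isBigO_one_chebyshevLeadingTerm_of_isBigO_inv ih_succ
    have hbdd : (fun n : ℕ => k ^ 2 * ((n : ℝ)⁻¹ * chebyshevLeadingTerm θ k n) -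
        (2 * k + 1) * cot θ * chebyshevLeadingTerm θ (k + 1) n)
        =O[atTop] (fun _ => (1 : ℝ)) := by
      refine .sub (.const_mul_left ?_ _) (hbdd_succ.const_mul_left _)
      simpa using isBigO_one_inv_natCast.mul hbdd_k
    have hperturbation := (Asymptotics.isBigO_refl (fun n : ℕ => (n : ℝ)⁻¹) atTop).mul hbdd
    simp only [mul_one] at hperturbation
    refine (ih_k.neg_left.sub hperturbation).congr' ?_ .rfl
    filter_upwards [eventually_ne_atTop 0] with n hn
    have hcos : iteratedDeriv (k + 2) cos (n * θ) = -iteratedDeriv k cos (n * θ) := by simp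
    rw [hcos, chebyshevLeadingTerm_add_two hθ k hn]
    ring

theorem deriv_comparison_tendsto_zero_general {θ : ℝ} (hθ : sin θ ≠ 0) (r : ℕ) :
    Tendsto (fun n : ℕ => iteratedDeriv r cos (n * θ) -
        ((n : ℝ) ^ r)⁻¹ * (derivative^[r] (Chebyshev.T ℝ n)).eval (cos θ) * (-sin θ) ^ r)
      atTop (nhds 0) :=
  (isBigO_inv_iteratedDeriv_cos_sub_chebyshevLeadingTerm hθ r).trans_tendsto
    tendsto_inv_atTop_nhds_zero_nat

/-- for fixed `θ ∈ (0,π)` and `r ∈ ℕ`,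
`lim_{n→∞} (ξ_r(nθ) − n^{−r} T_n^{(r)}(cos θ) (−sin θ)^r) = 0`,
where `ξ_r` is the `r`-th derivative of cosine and `T_n^{(r)}` the `r`-th derivative of the
Chebyshev polynomial `T_n`. -/
theorem deriv_comparison_tendsto_zero
    (θ : ℝ) (hθ : θ ∈ Set.Ioo 0 π) (r : ℕ) :
    Filter.Tendsto (fun n : ℕ =>
        iteratedDeriv r Real.cos (n * θ) -
          ((n : ℝ) ^ r)⁻¹ *
            ((Polynomial.derivative^[r] (Polynomial.Chebyshev.T ℝ n)).eval (Real.cos θ)) *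
            (-Real.sin θ) ^ r)
      Filter.atTop (nhds 0) :=
  deriv_comparison_tendsto_zero_general (sin_pos_of_mem_Ioo hθ).ne' r
end

section
/- For every measurable function f : Ω → [0,∞], ∫_{[0,π]²} f(x, θ(x,y)) dx dy = ∫_{Ω} f(x,θ) · 2 sin θ / √(1 − (2 cos θ − cos x)²) dx dθ, where Ω = {(x,θ) ∈ [0,π]² : |2 cos θ − cos x| ≤ 1}. -/
open Real MeasureTheory

/-- `Ω = {(x,θ) ∈ [0,π]² : |2 cos θ − cos x| ≤ 1}`. -/
def omegaSet : Set (ℝ × ℝ) :=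
  {z | z ∈ Set.Icc (0 : ℝ) π ×ˢ Set.Icc (0 : ℝ) π ∧ |2 * Real.cos z.2 - Real.cos z.1| ≤ 1}

/-!
Integrating over `x` last reduces the formula to one in `y` and `θ` with `a = cos x` fixed. The
variable `u = cos y = 2 cos θ - a` runs through `[-1, 1]` along both parametrizations, with
`du = -sin y dy = -2 sin θ dθ`, so both integrals are one integral against the arcsine density
`1 / √(1 - u ^ 2)`.
-/

theorem setLIntegral_prod_eq_lintegral_section {α β : Type*} [MeasurableSpace α]
    [MeasurableSpace β] {μ : Measure α} {ν : Measure β} [SFinite ν] {s : Set (α × β)}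
    (hs : MeasurableSet s) {g : α × β → ENNReal} (hg : AEMeasurable g ((μ.prod ν).restrict s)) :
    ∫⁻ z in s, g z ∂μ.prod ν = ∫⁻ x, ∫⁻ y in Prod.mk x ⁻¹' s, g (x, y) ∂ν ∂μ := by
  rw [← lintegral_indicator hs, lintegral_prod _ ((aemeasurable_indicator_iff hs).mpr hg)]
  refine lintegral_congr fun x => ?_
  rw [← lintegral_indicator (measurable_prodMk_left hs)]
  rfl

section AffineCos

/-- The angles `t ∈ [0, π]` for which `m cos t - a` is the cosine of an angle. The slice of
`omegaSet` over `x ∈ [0, π]` is `cosSlice 2 (cos x)`. -/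
def cosSlice (m a : ℝ) : Set ℝ :=
  Set.Icc 0 π ∩ (fun t => m * cos t - a) ⁻¹' Set.Icc (-1) 1

theorem measurableSet_cosSlice (m a : ℝ) : MeasurableSet (cosSlice m a) :=
  measurableSet_Icc.inter (measurableSet_Icc.preimage (by fun_prop))

variable {m a : ℝ}

theorem setLIntegral_image_mul_cos_sub {s : Set ℝ} (hs : MeasurableSet s)
    (hsub : s ⊆ Set.Icc 0 π) (hm : m ≠ 0) (G : ℝ → ENNReal) :
    ∫⁻ u in (fun t => m * cos t - a) '' s, G u =
      ∫⁻ t in s, ENNReal.ofReal (|m| * sin t) * G (m * cos t - a) := by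
  have hderiv (t : ℝ) (_ : t ∈ s) :
      HasDerivWithinAt (fun t => m * cos t - a) (m * -sin t) s t :=
    (((hasDerivAt_cos t).const_mul m).sub_const a).hasDerivWithinAt
  have hinj : Set.InjOn (fun t => m * cos t - a) s := fun t ht t' ht' h =>
    injOn_cos (hsub ht) (hsub ht') (mul_left_cancel₀ hm (sub_left_injective h))
  rw [lintegral_image_eq_lintegral_abs_deriv_mul hs hderiv hinj]
  refine setLIntegral_congr_fun hs fun t ht => ?_
  have hsin : 0 ≤ sin t := sin_nonneg_of_mem_Icc (hsub ht)
  simp only [mul_neg, abs_neg, abs_mul, abs_of_nonneg hsin]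

theorem image_mul_cos_sub_cosSlice (h : |a| + 1 ≤ m) :
    (fun t => m * cos t - a) '' cosSlice m a = Set.Icc (-1) 1 := by
  rw [cosSlice, Set.image_inter_preimage, Set.inter_eq_right]
  intro u hu
  have hm : 0 < m := by linarith [abs_nonneg a]
  obtain ⟨hna, ha⟩ := abs_le.mp (show |a| ≤ m - 1 by linarith)
  have hmem : (u + a) / m ∈ Set.Icc (-1) 1 := by
    constructor
    · rw [le_div_iff₀ hm]; linarith [hu.1]
    · rw [div_le_iff₀ hm]; linarith [hu.2]
  refine ⟨arccos ((u + a) / m), ⟨arccos_nonneg _, arccos_le_pi _⟩, ?_⟩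
  simp only [cos_arccos hmem.1 hmem.2, mul_div_cancel₀ _ hm.ne', add_sub_cancel_right]

theorem setLIntegral_Icc_eq_comp_mul_cos_sub (h : |a| + 1 ≤ m) (G : ℝ → ENNReal) :
    ∫⁻ u in Set.Icc (-1) 1, G u =
      ∫⁻ t in cosSlice m a, ENNReal.ofReal (m * sin t) * G (m * cos t - a) := by
  have hm : 0 < m := by linarith [abs_nonneg a]
  have hsubst := setLIntegral_image_mul_cos_sub (a := a) (measurableSet_cosSlice m a)
    Set.inter_subset_left hm.ne' G
  rwa [image_mul_cos_sub_cosSlice h, abs_of_pos hm] at hsubst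

theorem setLIntegral_Icc_comp_cos (G : ℝ → ENNReal) :
    ∫⁻ y in Set.Icc 0 π, G (cos y) =
      ∫⁻ u in Set.Icc (-1) 1, G u * ENNReal.ofReal (1 / √(1 - u ^ 2)) := by
  have himage : (fun t => 1 * cos t - 0) '' Set.Icc 0 π = Set.Icc (-1) 1 := by
    simpa only [one_mul, sub_zero] using bijOn_cos.image_eq
  -- Pass to the open interval: where `sin y = 0`, `1 / √(1 - cos y ^ 2)` is `0`, not `∞`.
  rw [← himage, setLIntegral_image_mul_cos_sub measurableSet_Icc subset_rfl one_ne_zero,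
    ← setLIntegral_congr Ioo_ae_eq_Icc, ← setLIntegral_congr Ioo_ae_eq_Icc]
  refine setLIntegral_congr_fun measurableSet_Ioo fun y hy => ?_
  have hsin : 0 < sin y := sin_pos_of_mem_Ioo hy
  have hsqrt : √(1 - cos y ^ 2) = sin y := by rw [← sin_sq, sqrt_sq hsin.le]
  have hcancel : ENNReal.ofReal (sin y) * ENNReal.ofReal (1 / sin y) = 1 := by
    rw [← ENNReal.ofReal_mul hsin.le, mul_one_div_cancel hsin.ne', ENNReal.ofReal_one]
  simp only [abs_one, one_mul, sub_zero, hsqrt]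
  rw [mul_left_comm, hcancel, mul_one]

theorem setLIntegral_Icc_comp_arccos_add_cos_div (h : |a| + 1 ≤ m) (F : ℝ → ENNReal) :
    ∫⁻ y in Set.Icc 0 π, F (arccos ((a + cos y) / m)) =
      ∫⁻ t in cosSlice m a, F t * ENNReal.ofReal (m * sin t / √(1 - (m * cos t - a) ^ 2)) := by
  have hm : 0 < m := by linarith [abs_nonneg a]
  rw [setLIntegral_Icc_comp_cos fun u => F (arccos ((a + u) / m)),
    setLIntegral_Icc_eq_comp_mul_cos_sub h]
  refine setLIntegral_congr_fun (measurableSet_cosSlice m a) fun t ht => ?_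
  have hinv : arccos ((a + (m * cos t - a)) / m) = t := by
    rw [add_sub_cancel, mul_div_cancel_left₀ _ hm.ne', arccos_cos ht.1.1 ht.1.2]
  have hsin : 0 ≤ sin t := sin_nonneg_of_mem_Icc ht.1
  simp only [hinv]
  rw [mul_left_comm, ← ENNReal.ofReal_mul (mul_nonneg hm.le hsin), mul_one_div]

end AffineCos

theorem measurableSet_omegaSet : MeasurableSet omegaSet :=
  (measurableSet_Icc.prod measurableSet_Icc).inter
    (measurableSet_le (f := fun z : ℝ × ℝ => |2 * cos z.2 - cos z.1|) (by fun_prop)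
      measurable_const)

theorem prodMk_preimage_omegaSet {x : ℝ} (hx : x ∈ Set.Icc 0 π) :
    Prod.mk x ⁻¹' omegaSet = cosSlice 2 (cos x) := by
  ext t
  exact ⟨fun ht => ⟨ht.1.2, abs_le.mp ht.2⟩, fun ht => ⟨⟨hx, ht.1⟩, abs_le.mpr ht.2⟩⟩

theorem prodMk_preimage_omegaSet_of_notMem {x : ℝ} (hx : x ∉ Set.Icc 0 π) :
    Prod.mk x ⁻¹' omegaSet = ∅ :=
  Set.eq_empty_of_forall_notMem fun _ ht => hx ht.1.1

/-- change of variables formula: for every measurable `f : Ω → [0,∞]`,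
`∫_{[0,π]²} f(x, θ(x,y)) dx dy = ∫_Ω f(x,θ) · 2 sin θ / √(1 − (2cos θ − cos x)²) dx dθ`,
where `θ(x,y) = arccos((cos x + cos y)/2)`. -/
theorem change_of_variables_formula
    (f : ℝ × ℝ → ENNReal) (hf : Measurable f) :
    (∫⁻ z in Set.Icc (0 : ℝ) π ×ˢ Set.Icc (0 : ℝ) π,
        f (z.1, Real.arccos ((Real.cos z.1 + Real.cos z.2) / 2))) =
      ∫⁻ z in omegaSet,
        f z * ENNReal.ofReal
          (2 * Real.sin z.2 / Real.sqrt (1 - (2 * Real.cos z.2 - Real.cos z.1) ^ 2)) := by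
  rw [Measure.volume_eq_prod,
    setLIntegral_prod_eq_lintegral_section (measurableSet_Icc.prod measurableSet_Icc)
      (by fun_prop),
    setLIntegral_prod_eq_lintegral_section measurableSet_omegaSet (by fun_prop)]
  refine lintegral_congr fun x => ?_
  by_cases hx : x ∈ Set.Icc 0 π
  · have hcos : |cos x| + 1 ≤ 2 := by linarith [abs_cos_le_one x]
    rw [Set.mk_preimage_prod_right hx, prodMk_preimage_omegaSet hx]
    exact setLIntegral_Icc_comp_arccos_add_cos_div hcos fun t => f (x, t)
  · rw [Set.mk_preimage_prod_right_eq_empty hx, prodMk_preimage_omegaSet_of_notMem hx,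
      setLIntegral_empty, setLIntegral_empty]
end
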